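/- arXiv:math/0608328 — 2 statements merged into one kernel-verified Lean document; each statement's English description precedes it below -/
import Mathlib

section
/- Let p be an odd prime and let n be a positive even integer with (p−1) ∤ n. Then 2·Σ_{k=1}^n binom(pn−1, pk−1)·(−1)^k / ((−p)^{⌊(n−2)/(p−1)⌋}·p^{n+1}·n) = F_p(pn,0)/(pn), and F_p(pn,0)/(pn) ≡ (n_*!/(n_*+1))·B_{p−1−n_*} (mod p). -/
open Finset

/-- `x ≡ y (mod p^c)` for rationals: `x = y` or the `p`-adic valuation of `x - y`
is at least `c`. -/
def modCong (p : ℕ) (c : ℤ) (x y : ℚ) : Prop :=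
  x = y ∨ c ≤ padicValRat p (x - y)

/-- `C_p(n,r) = ∑_{0 ≤ k ≤ n, k ≡ r (mod p)} (-1)^k * binom(n,k)`. -/
def Cp (p n : ℕ) (r : ℤ) : ℚ :=
  ∑ k ∈ range (n+1), if ((k : ℤ) - r) % p = 0 then (-1 : ℚ)^k * (n.choose k) else 0

/-- The Fleck quotient `F_p(n,r) = (-p)^{-⌊(n-1)/(p-1)⌋} C_p(n,r) + [n = 0]`. -/
noncomputable def Fp (p n : ℕ) (r : ℤ) : ℚ :=
  (-(p:ℚ)) ^ (-(Int.fdiv ((n:ℤ) - 1) ((p:ℤ) - 1))) * Cp p n r + (if n = 0 then 1 else 0)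

/-- `n_*`: the unique integer in `{1,…,p-1}` with `n_* ≡ n (mod p-1)`. -/
def nLow (p n : ℕ) : ℕ := ((((n:ℤ) - 1) % ((p:ℤ) - 1)) + 1).toNat

/-!
Let `S(f)` be the sum of the coefficients of `f ∈ ℤ[X]` at exponents divisible by `p`; it vanishes
on the multiples of `1 - X^p`. Since `(1 - X)^(p-1) = (1 + X + ⋯ + X^(p-1)) - p G` with `G(1) = 1`,
dividing `S((1 - X)^(pn) f)` by its power of `-p` leaves an integral functional `φ(f)` with
`φ(1) = F_p(pn, 0)`. The substitution `X ↦ X^g`, for `g` prime to `p`, preserves `S`, so `φ` is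
invariant under `f ↦ c^(pn) f(X^g)`, where `c = 1 + X + ⋯ + X^(g-1)`. Now `c^p = c(X^p) + p h`, and
`φ` sees `c(X^p)` as the scalar `g`.

Modulo `p` this gives `φ(f) ≡ g^n φ(f(X^g))`, which, normalised by `φ((1 - X)^K) ≡ 1`, identifies
`φ(f)` with the coefficient of `x^K` in `f(e^x)`, for `K = p - 1 - n_*`. To the next order it gives
`(1 - g^n) φ(1)/(pn) ≡ g^(n-1) φ(h)`. Bernoulli numbers enter through `h(e^x)`, because
`x` times the logarithmic derivative of `c(e^x) = (e^(gx) - 1)/(e^x - 1)` is `β(gx) - β(x)`,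
with `β(x) = x e^x/(e^x - 1)`. Choosing `g` with `g^n ≢ 1`, one obtains `φ(1)/(pn) ≡ B_K/(K · K!)`,
and Wilson's theorem turns `1/(K · K!)` into `n_*!/(n_* + 1)`.
-/

section ResidueSum

open Polynomial

/-- The sum of the coefficients of a polynomial at the exponents divisible by `p`. It is `R`-linear,
and `C_p(n, 0)` is its value at `(1 - X) ^ n`. -/
noncomputable def residueSum {R : Type*} [Semiring R] (p : ℕ) : R[X] →ₗ[R] R :=
  Polynomial.lsum fun j => if p ∣ j then LinearMap.id else 0

lemma residueSum_monomial {R : Type*} [Semiring R] (p j : ℕ) (a : R) :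
    residueSum p (monomial j a) = if p ∣ j then a else 0 := by
  by_cases h : p ∣ j <;> simp [residueSum, Polynomial.lsum_apply, h]

lemma residueSum_mul_X_pow {R : Type*} [Semiring R] (p k : ℕ) (f : R[X]) :
    residueSum p (f * X ^ (p * k)) = residueSum p f := by
  induction f using Polynomial.induction_on' with
  | add f g hf hg => rw [add_mul, map_add, map_add, hf, hg]
  | monomial j a =>
    simp only [X_pow_eq_monomial, monomial_mul_monomial, residueSum_monomial, mul_one,
      Nat.dvd_add_left (dvd_mul_right p k)]

variable {R : Type*} [CommRing R] {p : ℕ}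

lemma residueSum_mul_expand (p : ℕ) (f q : R[X]) :
    residueSum p (f * expand R p q) = q.eval 1 * residueSum p f := by
  induction q using Polynomial.induction_on' with
  | add q r hq hr => rw [map_add, mul_add, map_add, hq, hr, eval_add, add_mul]
  | monomial j a =>
    rw [expand_monomial, ← C_mul_X_pow_eq_monomial, ← mul_assoc, mul_comm j p, residueSum_mul_X_pow,
      mul_comm f, ← smul_eq_C_mul, map_smul, smul_eq_mul, eval_monomial, one_pow, mul_one]

lemma residueSum_expand {g : ℕ} (h : p.Coprime g) (f : R[X]) :
    residueSum p (expand R g f) = residueSum p f := by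
  induction f using Polynomial.induction_on' with
  | add f q hf hq => rw [map_add, map_add, map_add, hf, hq]
  | monomial j a => simp only [expand_monomial, residueSum_monomial, h.dvd_mul_right]

lemma residueSum_geom_sum (hp : 0 < p) : residueSum p (∑ i ∈ range p, (X : R[X]) ^ i) = 1 := by
  simp only [map_sum, X_pow_eq_monomial, residueSum_monomial]
  rw [Finset.sum_eq_single_of_mem 0 (mem_range.2 hp), if_pos (dvd_zero p)]
  exact fun i hi hi0 => if_neg fun hd => hi0 (Nat.eq_zero_of_dvd_of_lt hd (mem_range.1 hi))

lemma residueSum_mul_geom_sum (hp : 0 < p) (f : R[X]) :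
    residueSum p (f * ∑ i ∈ range p, X ^ i) = f.eval 1 := by
  obtain ⟨q, hq⟩ := X_sub_C_dvd_sub_C_eval (a := 1) (p := f)
  have hf : f * ∑ i ∈ range p, X ^ i
      = f.eval 1 • ∑ i ∈ range p, X ^ i + q * expand R p (X - 1) := by
    rw [smul_eq_C_mul, map_sub, expand_X, map_one, ← mul_geom_sum, ← C_1]
    linear_combination (∑ i ∈ range p, X ^ i) * hq
  rw [hf, map_add, map_smul, residueSum_geom_sum hp, residueSum_mul_expand]
  simp

lemma residueSum_one_sub_X_pow (p m : ℕ) : residueSum p ((1 - X : R[X]) ^ m) =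
    ∑ k ∈ range (m + 1), if p ∣ k then (-1 : R) ^ k * m.choose k else 0 := by
  have hexp : (1 - X : R[X]) ^ m =
      ∑ k ∈ range (m + 1), monomial k ((-1 : R) ^ k * m.choose k) := by
    rw [sub_eq_neg_add, add_pow]
    refine Finset.sum_congr rfl fun k _ => ?_
    rw [← C_mul_X_pow_eq_monomial, neg_pow]
    simp only [one_pow, map_mul, map_pow, map_neg, map_one, map_natCast]
    ring
  simp only [hexp, map_sum, residueSum_monomial]

lemma Cp_zero_eq_residueSum (p m : ℕ) :
    Cp p m 0 = ((residueSum p ((1 - X) ^ m) : ℤ) : ℚ) := by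
  rw [residueSum_one_sub_X_pow, Cp, Int.cast_sum]
  refine Finset.sum_congr rfl fun k _ => ?_
  simp only [sub_zero, ← Int.dvd_iff_emod_eq_zero, Int.natCast_dvd_natCast]
  push_cast
  rfl

lemma residueSum_geom_sum_add_pow_mul (hp : 0 < p) (G f : R[X]) (N : ℕ) (hf : f.eval 1 = 0) :
    residueSum p ((∑ i ∈ range p, X ^ i + G) ^ N * f) = residueSum p (G ^ N * f) := by
  obtain ⟨q, hq⟩ := sub_dvd_pow_sub_pow (∑ i ∈ range p, X ^ i + G) G N
  rw [add_sub_cancel_right] at hq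
  have hdiff : (∑ i ∈ range p, X ^ i + G) ^ N * f
      = q * f * ∑ i ∈ range p, X ^ i + G ^ N * f := by
    linear_combination f * hq
  rw [hdiff, map_add, residueSum_mul_geom_sum hp, eval_mul, hf, mul_zero, zero_add]

end ResidueSum

section Frobenius

open Polynomial

variable {p : ℕ}

lemma C_intCast_dvd_iff_map_eq_zero (f : ℤ[X]) :
    C (p : ℤ) ∣ f ↔ f.map (Int.castRingHom (ZMod p)) = 0 := by
  rw [C_dvd_iff_dvd_coeff, Polynomial.ext_iff]
  simp [ZMod.intCast_zmod_eq_zero_iff_dvd]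

lemma exists_one_sub_X_pow_eq (hp : p.Prime) :
    ∃ G : ℤ[X], (1 - X) ^ (p - 1) = ∑ i ∈ range p, X ^ i + C (-p : ℤ) * G ∧ G.eval 1 = 1 := by
  have := Fact.mk hp
  have hdvd : C (p : ℤ) ∣ ∑ i ∈ range p, (X : ℤ[X]) ^ i - (1 - X) ^ (p - 1) := by
    have h1 : (1 - X : (ZMod p)[X]) ≠ 0 := fun h => by simpa using congrArg (eval 0) h
    have h2 : (1 - X : (ZMod p)[X]) * (1 - X) ^ (p - 1) = 1 - X ^ p := by
      rw [mul_pow_sub_one hp.ne_zero, sub_pow_char, one_pow]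
    rw [C_intCast_dvd_iff_map_eq_zero]
    apply mul_left_cancel₀ h1
    simp [Polynomial.map_sum, mul_sub, h2, mul_neg_geom_sum]
  obtain ⟨G, hG⟩ := hdvd
  refine ⟨G, by rw [C_neg]; linear_combination -hG, ?_⟩
  have h1 := congrArg (eval 1) hG
  have hp0 : (p : ℤ) ≠ 0 := mod_cast hp.ne_zero
  apply mul_left_cancel₀ hp0
  simpa [eval_finsetSum, Nat.sub_ne_zero_of_lt hp.one_lt] using h1.symm

lemma exists_pow_eq_expand_add (hp : p.Prime) (f : ℤ[X]) :
    ∃ h : ℤ[X], f ^ p = expand ℤ p f + C (p : ℤ) * h := by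
  have := Fact.mk hp
  have hdvd : C (p : ℤ) ∣ f ^ p - expand ℤ p f := by
    rw [C_intCast_dvd_iff_map_eq_zero, Polynomial.map_sub, Polynomial.map_pow, map_expand,
      ZMod.expand_card, sub_self]
  obtain ⟨h, hh⟩ := hdvd
  exact ⟨h, by linear_combination hh⟩

end Frobenius

section FleckFunctional

open Polynomial

/-- `φ` is the functional `f ↦ (-p)^(-⌊(m-1)/(p-1)⌋) * residueSum p ((1 - X)^m * f)`, a linearised
form of the Fleck quotient: `F_p(m, 0)` is its value at `1`. The division is cleared, so that
Fleck's divisibility theorem is the existence of an integer-valued `φ`. -/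
def IsFleckFunctional (p m : ℕ) (φ : ℤ[X] →ₗ[ℤ] ℤ) : Prop :=
  ∀ f, residueSum p ((1 - X) ^ m * f) = (-p : ℤ) ^ ((m - 1) / (p - 1)) * φ f

theorem exists_isFleckFunctional {p t K : ℕ} (hp : p.Prime) (N : ℕ) (ht : 0 < t)
    (hK : t + K = p - 1) :
    ∃ φ, IsFleckFunctional p ((p - 1) * N + t) φ ∧ (φ ((1 - X) ^ K) : ZMod p) = 1 := by
  obtain ⟨G, hG, hG1⟩ := exists_one_sub_X_pow_eq hp
  refine ⟨residueSum p ∘ₗ LinearMap.mulLeft ℤ (G ^ N * (1 - X) ^ t), fun f => ?_, ?_⟩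
  · have hN : ((p - 1) * N + t - 1) / (p - 1) = N := by
      rw [Nat.add_sub_assoc ht, Nat.mul_add_div (by omega), Nat.div_eq_of_lt (by omega), add_zero]
    have hval : ((1 - X) ^ t * f : ℤ[X]).eval 1 = 0 := by simp [ht.ne']
    rw [hN, pow_add, pow_mul, hG, mul_assoc, residueSum_geom_sum_add_pow_mul hp.pos _ _ _ hval,
      mul_pow, ← C_pow, mul_assoc, ← smul_eq_C_mul, map_smul, smul_eq_mul, LinearMap.comp_apply,
      LinearMap.mulLeft_apply, mul_assoc]
  · rw [LinearMap.comp_apply, LinearMap.mulLeft_apply, mul_assoc, ← pow_add, hK, hG, mul_add,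
      map_add, residueSum_mul_geom_sum hp.pos, eval_pow, hG1, one_pow, mul_left_comm,
      ← smul_eq_C_mul, map_smul]
    simp

namespace IsFleckFunctional

variable {p m n g : ℕ} {φ : ℤ[X] →ₗ[ℤ] ℤ}

lemma Fp_eq (hφ : IsFleckFunctional p m φ) (hp : 1 < p) (hm : 0 < m) : Fp p m 0 = φ 1 := by
  have hfloor : Int.fdiv ((m : ℤ) - 1) ((p : ℤ) - 1) = ((m - 1) / (p - 1) : ℕ) := by
    rw [Int.fdiv_eq_ediv_of_nonneg _ (by omega)]
    push_cast [Nat.cast_sub hm, Nat.cast_sub hp.le]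
    rfl
  have hp0 : (-(p : ℚ)) ^ ((m - 1) / (p - 1)) ≠ 0 :=
    pow_ne_zero _ (neg_ne_zero.2 (mod_cast (zero_lt_one.trans hp).ne'))
  have h1 := hφ 1
  rw [mul_one] at h1
  rw [Fp, if_neg hm.ne', add_zero, hfloor, Cp_zero_eq_residueSum, h1, zpow_neg, zpow_natCast]
  push_cast
  rw [inv_mul_cancel_left₀ hp0]

lemma apply_eq (hφ : IsFleckFunctional p m φ) (hp : 0 < p) {f q : ℤ[X]} {c : ℤ}
    (h : residueSum p ((1 - X) ^ m * f) = c * residueSum p ((1 - X) ^ m * q)) :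
    φ f = c * φ q := by
  have hp0 : (-p : ℤ) ^ ((m - 1) / (p - 1)) ≠ 0 :=
    pow_ne_zero _ (neg_ne_zero.2 (mod_cast hp.ne'))
  apply mul_left_cancel₀ hp0
  rw [← hφ, h, hφ, mul_left_comm]

lemma apply_expand_mul (hφ : IsFleckFunctional p m φ) (hp : 0 < p) (q f : ℤ[X]) :
    φ (expand ℤ p q * f) = q.eval 1 * φ f :=
  hφ.apply_eq hp (by rw [mul_left_comm, mul_comm (expand ℤ p q), residueSum_mul_expand])

lemma apply_geom_sum_pow_mul_expand (hφ : IsFleckFunctional p m φ) (hp : 0 < p)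
    (hg : p.Coprime g) (f : ℤ[X]) :
    φ ((∑ i ∈ range g, X ^ i) ^ m * expand ℤ g f) = φ f := by
  have hsub : (1 - X) ^ m * ((∑ i ∈ range g, X ^ i) ^ m * expand ℤ g f)
      = expand ℤ g ((1 - X) ^ m * f) := by
    rw [← mul_assoc, ← mul_pow, mul_neg_geom_sum]
    simp
  rw [← one_mul (φ f)]
  exact hφ.apply_eq hp (by rw [hsub, residueSum_expand hg, one_mul])

lemma apply_eq_sum (hφ : IsFleckFunctional p (p * n) φ) (hp : 0 < p) (hg : p.Coprime g)
    {h : ℤ[X]} (hh : (∑ i ∈ range g, X ^ i) ^ p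
      = expand ℤ p (∑ i ∈ range g, X ^ i) + C (p : ℤ) * h) (f : ℤ[X]) :
    φ f = ∑ i ∈ range (n + 1),
      (n.choose i * p ^ i * g ^ (n - i) : ℤ) * φ (h ^ i * expand ℤ g f) := by
  rw [← hφ.apply_geom_sum_pow_mul_expand hp hg, pow_mul, hh, add_comm, add_pow, Finset.sum_mul,
    map_sum]
  refine Finset.sum_congr rfl fun i _ => ?_
  have hterm : (C (p : ℤ) * h) ^ i * expand ℤ p (∑ i ∈ range g, X ^ i) ^ (n - i) * (n.choose i)
      * expand ℤ g f = (n.choose i * p ^ i : ℤ) •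
        (expand ℤ p ((∑ i ∈ range g, X ^ i) ^ (n - i)) * (h ^ i * expand ℤ g f)) := by
    rw [smul_eq_C_mul, mul_pow, map_pow]
    simp only [C_mul, C_pow, map_natCast]
    ring
  rw [hterm, map_smul, hφ.apply_expand_mul hp, eval_pow, eval_finsetSum]
  simp only [eval_pow, eval_X, one_pow, sum_const, card_range, nsmul_eq_mul, mul_one, smul_eq_mul,
    mul_assoc]

lemma apply_eq_pow_mul (hφ : IsFleckFunctional p (p * n) φ) (hp : p.Prime) (hg : p.Coprime g)
    (f : ℤ[X]) : (φ f : ZMod p) = g ^ n * φ (expand ℤ g f) := by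
  obtain ⟨h, hh⟩ := exists_pow_eq_expand_add hp (∑ i ∈ range g, X ^ i)
  rw [hφ.apply_eq_sum hp.pos hg hh, Finset.sum_range_succ', Int.cast_add, Int.cast_sum,
    Finset.sum_eq_zero fun i _ => by simp [pow_succ]]
  simp

end IsFleckFunctional

end FleckFunctional

section PadicIntegrality

/-- The ring of `p`-integral rational numbers. A congruence `x ≡ y` modulo its maximal ideal is
expressed below as `Rat.padicValuation p (x - y) < 1`. -/
noncomputable abbrev pIntegers (p : ℕ) [Fact p.Prime] : Subring ℚ :=
  (Rat.padicValuation p).integer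

variable {p : ℕ} [hp : Fact p.Prime]

lemma padicValuation_intCast_lt_one_iff {a : ℤ} :
    Rat.padicValuation p a < 1 ↔ (a : ZMod p) = 0 := by
  rw [Rat.padicValuation_cast, Int.padicValuation_lt_one_iff, ZMod.intCast_zmod_eq_zero_iff_dvd]

lemma padicValuation_intCast_eq_one_iff {a : ℤ} :
    Rat.padicValuation p a = 1 ↔ (a : ZMod p) ≠ 0 := by
  rw [Rat.padicValuation_cast, Int.padicValuation_eq_one_iff, Ne, ZMod.intCast_zmod_eq_zero_iff_dvd]

lemma padicValuation_natCast_eq_one_iff {a : ℕ} :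
    Rat.padicValuation p a = 1 ↔ ¬ p ∣ a := by
  rw [← Int.cast_natCast, padicValuation_intCast_eq_one_iff, Int.cast_natCast, Ne,
    ZMod.natCast_eq_zero_iff]

lemma padicValuation_mul_lt_one {x y : ℚ} (hx : x ∈ pIntegers p)
    (hy : Rat.padicValuation p y < 1) : Rat.padicValuation p (x * y) < 1 := by
  rw [map_mul]
  exact mul_lt_one_of_nonneg_of_lt_one_right hx zero_le hy

lemma padicValuation_prime_mul_lt_one {x : ℚ} (hx : x ∈ pIntegers p) :
    Rat.padicValuation p (p * x) < 1 := by
  rw [mul_comm]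
  exact padicValuation_mul_lt_one hx
    (mod_cast padicValuation_intCast_lt_one_iff.2 (mod_cast ZMod.natCast_self p))

lemma modCong_one_of_padicValuation_lt_one {x y : ℚ} (h : Rat.padicValuation p (x - y) < 1) :
    modCong p 1 x y := by
  refine or_iff_not_imp_left.2 fun hxy => ?_
  have hval : Rat.padicValuation p (x - y) = WithZero.exp (-padicValRat p (x - y)) :=
    if_neg (sub_ne_zero.2 hxy)
  rw [hval, ← WithZero.exp_zero, WithZero.exp_lt_exp] at h
  lia

lemma inv_natCast_mem_pIntegers {a : ℕ} (ha : ¬ p ∣ a) : (a : ℚ)⁻¹ ∈ pIntegers p := by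
  rw [Valuation.mem_integer_iff, map_inv₀, padicValuation_natCast_eq_one_iff.2 ha, inv_one]

lemma div_factorial_mem_pIntegers {x : ℚ} {j : ℕ} (hx : x ∈ pIntegers p) (hj : j < p) :
    x / j.factorial ∈ pIntegers p :=
  mul_mem hx (inv_natCast_mem_pIntegers (mt hp.out.dvd_factorial.1 hj.not_ge))

lemma bernoulli'_mem_pIntegers {j : ℕ} (hj : j + 1 < p) : bernoulli' j ∈ pIntegers p := by
  induction j using Nat.strong_induction_on with
  | _ j ih =>
    have h := sum_bernoulli' (j + 1)
    rw [Finset.sum_range_succ, Nat.choose_succ_self_right] at h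
    have hrec : bernoulli' j = ((j + 1 : ℕ) : ℚ)⁻¹ *
        (((j + 1 : ℕ) : ℚ) - ∑ k ∈ range j, ((j + 1).choose k : ℚ) * bernoulli' k) := by
      have : ((j + 1 : ℕ) : ℚ) ≠ 0 := by positivity
      field_simp
      linear_combination h
    rw [hrec]
    refine mul_mem (inv_natCast_mem_pIntegers (Nat.not_dvd_of_pos_of_lt j.succ_pos hj))
      (sub_mem (natCast_mem _ _) (sum_mem fun k hk => mul_mem (natCast_mem _ _) ?_))
    have hkj : k < j := mem_range.1 hk
    exact ih k hkj (by omega)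

lemma padicValuation_pow_div_lt_one (hp3 : 3 ≤ p) {i : ℕ} (hi : 0 < i) :
    Rat.padicValuation p ((p : ℚ) ^ i / (i + 1 : ℕ)) < 1 := by
  obtain ⟨e, u, hu, heu⟩ := Nat.exists_eq_pow_mul_and_not_dvd i.succ_ne_zero p hp.out.ne_one
  have hei : e < i := by
    have hdvd : p ^ e ≤ i + 1 := Nat.le_of_dvd i.succ_pos (Dvd.intro u heu.symm)
    have hbern := one_add_mul_le_pow (show (-2 : ℤ) ≤ 2 by norm_num) e
    have hpow : (1 + 2 : ℤ) ^ e ≤ p ^ e := pow_le_pow_left₀ (by norm_num) (mod_cast hp3) e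
    zify at hdvd ⊢
    lia
  have hpe : (p : ℚ) ^ e ≠ 0 := pow_ne_zero _ (mod_cast hp.out.ne_zero)
  have hsplit : (p : ℚ) ^ i / (i + 1 : ℕ) = p * (p ^ (i - e - 1) * (u : ℚ)⁻¹) := by
    rw [← Nat.succ_eq_add_one, heu]
    obtain ⟨d, rfl⟩ := Nat.exists_eq_add_of_lt hei
    have hd : e + d + 1 - e - 1 = d := by omega
    rw [hd]
    push_cast
    field_simp
    ring
  rw [hsplit]
  exact padicValuation_prime_mul_lt_one
    (mul_mem (pow_mem (natCast_mem _ _) _) (inv_natCast_mem_pIntegers hu))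

end PadicIntegrality

section PowerSeries

open PowerSeries

/-- The power series whose coefficients up to degree `K` lie in `O`. The truncation is there for the
exponential series, whose coefficients are `p`-integral only below degree `p`. -/
def integralUpTo {R : Type*} [CommRing R] (O : Subring R) (K : ℕ) : Subring R⟦X⟧ where
  carrier := {f | ∀ j ≤ K, coeff j f ∈ O}
  mul_mem' hf hg j hj := by
    rw [coeff_mul]
    exact sum_mem fun x hx => mul_mem (hf _ ((HasAntidiagonal.antidiagonal.fst_le hx).trans hj))
      (hg _ ((HasAntidiagonal.antidiagonal.snd_le hx).trans hj))
  one_mem' j _ := by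
    rw [coeff_one]
    split_ifs
    exacts [one_mem O, zero_mem O]
  add_mem' hf hg j hj := add_mem (hf j hj) (hg j hj)
  zero_mem' j _ := zero_mem O
  neg_mem' hf j hj := neg_mem (hf j hj)

variable {R : Type*} [CommRing R] {O : Subring R} {K : ℕ}

lemma rescale_mem_integralUpTo {a : R} {f : R⟦X⟧} (ha : a ∈ O) (hf : f ∈ integralUpTo O K) :
    rescale a f ∈ integralUpTo O K := fun j hj => by
  rw [coeff_rescale]
  exact mul_mem (pow_mem ha j) (hf j hj)

lemma exists_rescale_eq_C_add {a : R} {f : R⟦X⟧} (ha : a ∈ O) (hf : f ∈ integralUpTo O K) :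
    ∃ q ∈ integralUpTo O K, rescale a f = C (coeff 0 f) + C a * q := by
  refine ⟨X * rescale a (mk fun j => coeff (j + 1) f), fun j hj => ?_, ?_⟩
  · cases j with
    | zero => simp [zero_mem]
    | succ j =>
      rw [coeff_succ_X_mul, coeff_rescale, coeff_mk]
      exact mul_mem (pow_mem ha j) (hf (j + 1) hj)
  · ext j
    cases j with
    | zero => simp
    | succ j =>
      rw [map_add, coeff_C, if_neg j.succ_ne_zero, zero_add, coeff_C_mul, coeff_succ_X_mul,
        coeff_rescale, coeff_rescale, coeff_mk, pow_succ']
      ring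

lemma X_mul_derivative_rescale (a : R) (f : R⟦X⟧) :
    X * d⁄dX R (rescale a f) = rescale a (X * d⁄dX R f) := by
  ext j
  cases j with
  | zero => simp
  | succ j =>
    simp only [coeff_succ_X_mul, coeff_rescale, coeff_derivative]
    ring

-- Apply the Euler operator `X * d/dX` to `hfh`. It commutes with `rescale p`, so the term coming
-- from `f(pX)` carries a factor `p ^ K`, and `2 ≤ K` leaves a factor `p` after dividing by `p`.
lemma exists_coeff_frobenius_quotient [IsDomain R] {p : ℕ} (hp : (p : R) ≠ 0) (hK : 2 ≤ K)
    {f L h : R⟦X⟧} (hf : f ∈ integralUpTo O K) (hL : L ∈ integralUpTo O K)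
    (hh : h ∈ integralUpTo O K) (hfL : X * d⁄dX R f = f * L)
    (hfh : f ^ p = rescale (p : R) f + C (p : R) * h) :
    ∃ z ∈ O, K * coeff K h - coeff 0 f * coeff K L = p * z := by
  obtain ⟨q, hq, hfq⟩ := exists_rescale_eq_C_add (natCast_mem O p) hf
  obtain ⟨k, rfl⟩ := Nat.exists_eq_add_of_le' hK
  have hpow : X * d⁄dX R (f ^ p) = C (p : R) * f ^ p * L := by
    cases p with
    | zero => simp
    | succ p =>
      rw [derivative_pow, Nat.add_sub_cancel, map_natCast, pow_succ]
      linear_combination (p + 1 : ℕ) * f ^ p * hfL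
  have hder : C (p : R) * (X * d⁄dX R h)
      = C (p : R) * (C (coeff 0 f) * L + C (p : R) * ((q + h) * L)) - rescale (p : R) (f * L) := by
    have hX := congrArg (fun s => X * d⁄dX R s) hfh
    simp only [hpow, map_add, mul_add, X_mul_derivative_rescale, hfL] at hX
    rw [← smul_eq_C_mul h, Derivation.map_smul, smul_eq_C_mul, hfh, hfq] at hX
    linear_combination -hX
  refine ⟨coeff (k + 2) ((q + h) * L) - p ^ k * coeff (k + 2) (f * L),
    sub_mem (mul_mem (add_mem hq hh) hL _ le_rfl)
      (mul_mem (pow_mem (natCast_mem O p) k) (mul_mem hf hL _ le_rfl)), ?_⟩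
  have hcoeff := congrArg (coeff (k + 2)) hder
  simp only [map_sub, map_add, coeff_C_mul, coeff_succ_X_mul, coeff_derivative, coeff_rescale]
    at hcoeff
  apply mul_left_cancel₀ hp
  push_cast at hcoeff ⊢
  linear_combination hcoeff

end PowerSeries

section Exp

open PowerSeries

lemma aeval_exp_expand (p : ℕ) (f : Polynomial ℤ) :
    Polynomial.aeval (exp ℚ) (Polynomial.expand ℤ p f)
      = rescale (p : ℚ) (Polynomial.aeval (exp ℚ) f) := by
  rw [Polynomial.expand_aeval, exp_pow_eq_rescale_exp, Polynomial.aeval_def,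
    Polynomial.aeval_def, Polynomial.hom_eval₂]
  congr 1
  exact RingHom.ext_int _ _

lemma coeff_aeval_exp_monomial (K j : ℕ) (a : ℤ) :
    coeff K (Polynomial.aeval (exp ℚ) (Polynomial.monomial j a)) = a * j ^ K / K.factorial := by
  rw [Polynomial.aeval_monomial, exp_pow_eq_rescale_exp, eq_intCast, ← zsmul_eq_mul, map_zsmul,
    coeff_rescale, coeff_exp, zsmul_eq_mul, map_div₀, map_one, map_natCast, mul_one_div,
    mul_div_assoc]

lemma coeff_aeval_exp_one_sub_X_pow {K : ℕ} (hK : Even K) :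
    coeff K (Polynomial.aeval (exp ℚ) ((1 - Polynomial.X : Polynomial ℤ) ^ K)) = 1 := by
  have hexp : exp ℚ - 1 = X * PowerSeries.mk fun j => coeff (j + 1) (exp ℚ) := by
    conv_lhs => rw [eq_X_mul_shift_add_const (exp ℚ)]
    simp
  rw [map_pow, map_sub, map_one, Polynomial.aeval_X, ← neg_sub, hK.neg_pow, hexp, mul_pow]
  have hcoeff := coeff_X_pow_mul ((PowerSeries.mk fun j => coeff (j + 1) (exp ℚ)) ^ K) K 0
  rw [zero_add] at hcoeff
  rw [hcoeff]
  simp [coeff_exp]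

lemma X_mul_derivative_geom_sum_exp (g : ℕ) :
    X * d⁄dX ℚ (∑ i ∈ range g, exp ℚ ^ i) = (∑ i ∈ range g, exp ℚ ^ i) *
      (rescale (g : ℚ) (bernoulli'PowerSeries ℚ) - bernoulli'PowerSeries ℚ) := by
  set f := ∑ i ∈ range g, exp ℚ ^ i
  have hgeom : f * (exp ℚ - 1) = exp ℚ ^ g - 1 := geom_sum_mul _ _
  have hB := bernoulli'PowerSeries_mul_exp_sub_one ℚ
  have hBg := congrArg (rescale (g : ℚ)) hB
  rw [map_mul, map_mul, map_sub, map_one, ← exp_pow_eq_rescale_exp, rescale_X] at hBg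
  have hpow : d⁄dX ℚ (exp ℚ ^ g) = C (g : ℚ) * exp ℚ ^ g := by
    cases g with
    | zero => simp
    | succ g => rw [derivative_pow, derivative_exp, Nat.add_sub_cancel, mul_assoc, ← pow_succ,
        map_natCast]
  have hder := congrArg (d⁄dX ℚ) hgeom
  rw [Derivation.leibniz, map_sub, map_sub, hpow, derivative_exp, derivative_one, sub_zero,
    sub_zero, smul_eq_mul, smul_eq_mul] at hder
  have hne : exp ℚ - 1 ≠ 0 := fun h => by
    simpa [coeff_exp, coeff_one] using congrArg (coeff 1) h
  apply mul_right_cancel₀ hne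
  linear_combination X * hder - hBg + f * hB - rescale (g : ℚ) (bernoulli'PowerSeries ℚ) * hgeom

variable {p K : ℕ} [Fact p.Prime]

lemma aeval_exp_mem_integralUpTo (hK : K < p) (f : Polynomial ℤ) :
    Polynomial.aeval (exp ℚ) f ∈ integralUpTo (pIntegers p) K := by
  have hexp : exp ℚ ∈ integralUpTo (pIntegers p) K := fun j hj => by
    rw [coeff_exp]
    exact div_factorial_mem_pIntegers (one_mem _) (by omega)
  rw [Polynomial.aeval_eq_sum_range]
  exact sum_mem fun i _ => zsmul_mem (pow_mem hexp i) _

lemma bernoulli'PowerSeries_mem_integralUpTo (hK : K + 1 < p) :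
    bernoulli'PowerSeries ℚ ∈ integralUpTo (pIntegers p) K := fun j hj => by
  rw [bernoulli'PowerSeries, coeff_mk]
  exact div_factorial_mem_pIntegers (bernoulli'_mem_pIntegers (by omega)) (by omega)

lemma padicValuation_coeff_aeval_exp_frobenius_quotient (hK : 2 ≤ K) (hKp : K + 1 < p) {g : ℕ}
    {h : Polynomial ℤ} (hh : (∑ i ∈ range g, Polynomial.X ^ i) ^ p
      = Polynomial.expand ℤ p (∑ i ∈ range g, Polynomial.X ^ i) + Polynomial.C (p : ℤ) * h) :
    Rat.padicValuation p (K * coeff K (Polynomial.aeval (exp ℚ) h)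
      - g * ((g ^ K - 1) * (bernoulli' K / K.factorial))) < 1 := by
  have hp0 : (p : ℚ) ≠ 0 := mod_cast (Fact.out : p.Prime).ne_zero
  have hβ := bernoulli'PowerSeries_mem_integralUpTo hKp
  have hint := aeval_exp_mem_integralUpTo (K := K) (p := p) (by omega)
  have hgeom : Polynomial.aeval (exp ℚ) (∑ i ∈ range g, Polynomial.X ^ i : Polynomial ℤ)
      = ∑ i ∈ range g, exp ℚ ^ i := by simp
  have hH := congrArg (Polynomial.aeval (exp ℚ)) hh
  rw [map_pow, map_add, map_mul, aeval_exp_expand, Polynomial.aeval_C, map_natCast, ← map_natCast C]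
    at hH
  obtain ⟨z, hz, hzK⟩ := exists_coeff_frobenius_quotient hp0 hK (hint _)
    (sub_mem (rescale_mem_integralUpTo (natCast_mem _ g) hβ) hβ) (hint h)
    (hgeom ▸ X_mul_derivative_geom_sum_exp g) hH
  have hf0 : coeff 0 (∑ i ∈ range g, exp ℚ ^ i) = g := by simp
  have hLK : coeff K (rescale (g : ℚ) (bernoulli'PowerSeries ℚ) - bernoulli'PowerSeries ℚ)
      = (g ^ K - 1) * (bernoulli' K / K.factorial) := by
    rw [map_sub, coeff_rescale, bernoulli'PowerSeries, coeff_mk, Algebra.algebraMap_self_apply]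
    ring
  rw [hgeom, hf0, hLK] at hzK
  rw [hzK]
  exact padicValuation_prime_mul_lt_one hz

end Exp

section Congruence

open Polynomial

lemma exists_coprime_pow_ne_one {p : ℕ} (hp : p.Prime) {n : ℕ} (hn : ¬ (p - 1) ∣ n) :
    ∃ g : ℕ, p.Coprime g ∧ (g : ZMod p) ^ n ≠ 1 := by
  have := Fact.mk hp
  have hnot := mt (FiniteField.forall_pow_eq_one_iff (ZMod p) n).1 (by rwa [ZMod.card])
  push Not at hnot
  obtain ⟨u, hu⟩ := hnot
  refine ⟨(u : ZMod p).val, (ZMod.val_coe_unit_coprime u).symm, fun hd => hu (Units.ext ?_)⟩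
  rwa [Units.val_pow_eq_pow_val, Units.val_one, ← ZMod.natCast_zmod_val (u : ZMod p)]

lemma zmod_pow_eq_one {p m : ℕ} [Fact p.Prime] {a : ZMod p} (ha : a ≠ 0) (hm : (p - 1) ∣ m) :
    a ^ m = 1 := by
  obtain ⟨q, rfl⟩ := hm
  rw [pow_mul, ZMod.pow_card_sub_one_eq_one ha, one_pow]

namespace IsFleckFunctional

variable {p n K : ℕ} [hp : Fact p.Prime] {φ : ℤ[X] →ₗ[ℤ] ℤ}

lemma apply_one_eq_zero (hφ : IsFleckFunctional p (p * n) φ) (hn : ¬ (p - 1) ∣ n) :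
    (φ 1 : ZMod p) = 0 := by
  obtain ⟨g, hg, hgn⟩ := exists_coprime_pow_ne_one hp.out hn
  have h1 := hφ.apply_eq_pow_mul hp.out hg 1
  rw [map_one (expand ℤ g)] at h1
  refine (mul_eq_zero.1 ?_).resolve_left (sub_ne_zero.2 hgn)
  linear_combination -h1

lemma apply_X_pow (hφ : IsFleckFunctional p (p * n) φ) (hn : ¬ (p - 1) ∣ n) (hK : K ≠ 0)
    (hnK : (p - 1) ∣ n + K) (j : ℕ) : (φ (X ^ j) : ZMod p) = j ^ K * φ X := by
  by_cases hj : p ∣ j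
  · obtain ⟨i, rfl⟩ := hj
    have hX : φ (X ^ (p * i)) = φ 1 := by
      simpa [pow_mul] using hφ.apply_expand_mul hp.out.pos (X ^ i) 1
    rw [hX, hφ.apply_one_eq_zero hn]
    simp [hK]
  · have hjp : (j : ZMod p) ≠ 0 := by rwa [Ne, ZMod.natCast_eq_zero_iff]
    have hX := hφ.apply_eq_pow_mul hp.out ((Nat.Prime.coprime_iff_not_dvd hp.out).2 hj) X
    rw [hX, expand_X, ← mul_assoc, ← pow_add, add_comm K, zmod_pow_eq_one hjp hnK, one_mul]

lemma padicValuation_apply_sub_apply_X (hφ : IsFleckFunctional p (p * n) φ)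
    (hn : ¬ (p - 1) ∣ n) (hK : K ≠ 0) (hnK : (p - 1) ∣ n + K) (f : ℤ[X]) :
    Rat.padicValuation p
      (φ f - φ X * (K.factorial * (aeval (PowerSeries.exp ℚ) f).coeff K)) < 1 := by
  induction f using Polynomial.induction_on' with
  | add f q hf hq =>
    have hadd := Valuation.map_add_lt _ hf hq
    convert hadd using 2
    simp only [map_add, Int.cast_add]
    ring
  | monomial j a =>
    have hint : (φ (monomial j a) - φ X * (K.factorial *
        (aeval (PowerSeries.exp ℚ) (monomial j a)).coeff K) : ℚ)
        = (a * (φ (X ^ j) - j ^ K * φ X) : ℤ) := by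
      rw [coeff_aeval_exp_monomial, ← smul_X_eq_monomial, map_smul, smul_eq_mul]
      have : (K.factorial : ℚ) ≠ 0 := by positivity
      push_cast
      field_simp
    rw [hint, padicValuation_intCast_lt_one_iff]
    push_cast
    rw [hφ.apply_X_pow hn hK hnK, sub_self, mul_zero]

lemma padicValuation_apply_sub_coeff (hφ : IsFleckFunctional p (p * n) φ)
    (hn : ¬ (p - 1) ∣ n) (hK : K ≠ 0) (hKp : K < p) (hKe : Even K) (hnK : (p - 1) ∣ n + K)
    (hφK : (φ ((1 - X) ^ K) : ZMod p) = 1) (f : ℤ[X]) :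
    Rat.padicValuation p (φ f - (aeval (PowerSeries.exp ℚ) f).coeff K) < 1 := by
  have hX : Rat.padicValuation p (φ X * K.factorial - 1) < 1 := by
    have h1 := hφ.padicValuation_apply_sub_apply_X hn hK hnK ((1 - X) ^ K)
    have h2 : Rat.padicValuation p (φ ((1 - X) ^ K) - 1) < 1 := by
      have hzero : ((φ ((1 - X) ^ K) - 1 : ℤ) : ZMod p) = 0 := by simp [hφK]
      exact_mod_cast padicValuation_intCast_lt_one_iff.2 hzero
    rw [coeff_aeval_exp_one_sub_X_pow hKe, mul_one] at h1
    convert Valuation.map_sub_lt _ h2 h1 using 2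
    ring
  have hf := hφ.padicValuation_apply_sub_apply_X hn hK hnK f
  convert Valuation.map_add_lt _ hf
    (padicValuation_mul_lt_one (aeval_exp_mem_integralUpTo hKp f K le_rfl) hX) using 2
  ring

lemma apply_one_div_mul_one_sub (hφ : IsFleckFunctional p (p * n) φ) (hn : 0 < n) {g : ℕ}
    (hg : p.Coprime g) {h : ℤ[X]} (hh : (∑ i ∈ range g, X ^ i) ^ p
      = expand ℤ p (∑ i ∈ range g, X ^ i) + C (p : ℤ) * h) :
    (φ 1 / (p * n) * (1 - g ^ n) : ℚ) = ∑ i ∈ range n,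
      (p ^ i / (i + 1 : ℕ) : ℚ) * ((n - 1).choose i * g ^ (n - 1 - i) * φ (h ^ (i + 1)) : ℤ) := by
  have hp0 : (p : ℚ) ≠ 0 := mod_cast hp.out.ne_zero
  have hn0 : (n : ℚ) ≠ 0 := mod_cast hn.ne'
  have h1 := hφ.apply_eq_sum hp.out.pos hg hh 1
  rw [Finset.sum_range_succ', map_one (expand ℤ g)] at h1
  have hsum : (φ 1 * (1 - g ^ n) : ℚ) = ∑ i ∈ range n, (n.choose (i + 1) * p ^ (i + 1) *
      g ^ (n - (i + 1)) * φ (h ^ (i + 1)) : ℚ) := by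
    have h2 := congrArg (Int.cast : ℤ → ℚ) h1
    push_cast at h2
    simp only [mul_one, pow_zero, Nat.choose_zero_right, Nat.cast_one, one_mul, Nat.sub_zero] at h2
    linear_combination h2
  rw [div_mul_eq_mul_div, hsum, Finset.sum_div]
  refine Finset.sum_congr rfl fun i _ => ?_
  have hchoose : (n * (n - 1).choose i : ℚ) = n.choose (i + 1) * (i + 1 : ℕ) := by
    have := Nat.add_one_mul_choose_eq (n - 1) i
    rw [Nat.sub_add_cancel hn] at this
    exact_mod_cast this
  have hi0 : ((i + 1 : ℕ) : ℚ) ≠ 0 := by positivity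
  have hexp : n - (i + 1) = n - 1 - i := by omega
  rw [hexp, div_eq_iff (mul_ne_zero hp0 hn0), div_mul_eq_mul_div, div_mul_eq_mul_div,
    eq_div_iff hi0]
  push_cast at hchoose ⊢
  linear_combination -(p ^ (i + 1) * g ^ (n - 1 - i) * φ (h ^ (i + 1)) : ℚ) * hchoose

lemma padicValuation_apply_one_div (hφ : IsFleckFunctional p (p * n) φ) (hp3 : 3 ≤ p)
    (hn : 0 < n) {g : ℕ} (hg : p.Coprime g) {h : ℤ[X]} (hh : (∑ i ∈ range g, X ^ i) ^ p
      = expand ℤ p (∑ i ∈ range g, X ^ i) + C (p : ℤ) * h) :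
    Rat.padicValuation p (φ 1 / (p * n) * (1 - g ^ n) - g ^ (n - 1) * φ h) < 1 := by
  rw [hφ.apply_one_div_mul_one_sub hn hg hh, ← Nat.sub_add_cancel hn, Finset.sum_range_succ']
  simp only [pow_zero, zero_add, Nat.cast_one, div_one, one_mul, Nat.choose_zero_right,
    Nat.sub_zero, pow_one, Int.cast_mul, Int.cast_pow, Int.cast_natCast, Nat.add_sub_cancel,
    add_sub_cancel_right]
  refine Valuation.map_sum_lt _ one_ne_zero fun i _ => ?_
  rw [mul_comm]
  exact padicValuation_mul_lt_one (mul_mem (mul_mem (natCast_mem _ _) (pow_mem (natCast_mem _ _) _))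
    (intCast_mem _ _)) (padicValuation_pow_div_lt_one hp3 i.succ_pos)

theorem padicValuation_apply_one_div_sub_bernoulli' (hφ : IsFleckFunctional p (p * n) φ)
    (hn : ¬ (p - 1) ∣ n) (hK : 2 ≤ K) (hKp : K + 1 < p) (hKe : Even K) (hnK : (p - 1) ∣ n + K)
    (hφK : (φ ((1 - X) ^ K) : ZMod p) = 1) :
    Rat.padicValuation p (K * (φ 1 / (p * n)) - bernoulli' K / K.factorial) < 1 := by
  obtain ⟨g, hg, hgn⟩ := exists_coprime_pow_ne_one hp.out hn
  obtain ⟨h, hh⟩ := exists_pow_eq_expand_add hp.out (∑ i ∈ range g, X ^ i)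
  have hn0 : 0 < n := Nat.pos_of_ne_zero fun h0 => hn (h0 ▸ dvd_zero _)
  have hφ1 := hφ.padicValuation_apply_one_div (by omega) hn0 hg hh
  have hφh := hφ.padicValuation_apply_sub_coeff hn (by omega) (by omega) hKe hnK hφK h
  have hhK := padicValuation_coeff_aeval_exp_frobenius_quotient hK hKp hh
  set x : ℚ := φ 1 / (p * n)
  set b : ℚ := bernoulli' K / K.factorial
  set H : ℚ := (aeval (PowerSeries.exp ℚ) h).coeff K
  have hb : b ∈ pIntegers p :=
    div_factorial_mem_pIntegers (bernoulli'_mem_pIntegers hKp) (by omega)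
  have hgK : Rat.padicValuation p ((g : ℚ) ^ (n + K) - 1) < 1 := by
    have hgp : (g : ZMod p) ≠ 0 := by
      rwa [Ne, ZMod.natCast_eq_zero_iff, ← Nat.Prime.coprime_iff_not_dvd hp.out]
    have hpow : (((g : ℤ) ^ (n + K) - 1 : ℤ) : ZMod p) = 0 := by simp [zmod_pow_eq_one hgp hnK]
    exact_mod_cast padicValuation_intCast_lt_one_iff.2 hpow
  have hunit : Rat.padicValuation p (1 - (g : ℚ) ^ n) = 1 := by
    have hpow : ((1 - (g : ℤ) ^ n : ℤ) : ZMod p) ≠ 0 := by simpa [sub_eq_zero] using hgn.symm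
    exact_mod_cast padicValuation_intCast_eq_one_iff.2 hpow
  have hgn1 : (g : ℚ) ^ (n - 1) * g = g ^ n := pow_sub_one_mul hn0.ne' _
  have hsplit : (1 - g ^ n) * (K * x - b) = K * (x * (1 - g ^ n) - g ^ (n - 1) * φ h)
      + K * g ^ (n - 1) * (φ h - H) + g ^ (n - 1) * (K * H - g * ((g ^ K - 1) * b))
      + b * (g ^ (n + K) - 1) := by
    rw [pow_add]
    linear_combination (g ^ K - 1) * b * hgn1
  have hKint : (K : ℚ) ∈ pIntegers p := natCast_mem _ K
  have hgint : (g : ℚ) ^ (n - 1) ∈ pIntegers p := pow_mem (natCast_mem _ g) _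
  rw [← one_mul (Rat.padicValuation p _), ← hunit, ← map_mul, hsplit, hunit]
  exact Valuation.map_add_lt _ (Valuation.map_add_lt _ (Valuation.map_add_lt _
    (padicValuation_mul_lt_one hKint hφ1) (padicValuation_mul_lt_one (mul_mem hKint hgint) hφh))
    (padicValuation_mul_lt_one hgint hhK)) (padicValuation_mul_lt_one hb hgK)

end IsFleckFunctional

end Congruence

section Wilson

lemma natCast_factorial_mul_factorial {p k t : ℕ} [Fact p.Prime] (h : k + t + 1 = p) :
    (k.factorial * t.factorial : ZMod p) = (-1) ^ (k + 1) := by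
  induction k generalizing t with
  | zero =>
    obtain rfl : t = p - 1 := by omega
    simp [ZMod.wilsons_lemma]
  | succ k ih =>
    have hkt := ih (t := t + 1) (by omega)
    have hsum : (k + 1 : ZMod p) + (t + 1) = 0 := by
      have hp := congrArg (Nat.cast : ℕ → ZMod p) h
      rw [ZMod.natCast_self] at hp
      push_cast at hp
      linear_combination hp
    have hne : ((t + 1 : ℕ) : ZMod p) ≠ 0 := by
      rw [Ne, ZMod.natCast_eq_zero_iff]
      exact Nat.not_dvd_of_pos_of_lt t.succ_pos (by omega)
    apply mul_left_cancel₀ hne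
    rw [Nat.factorial_succ] at hkt ⊢
    push_cast at hkt ⊢
    linear_combination (k + 1 : ZMod p) * hkt + (-1) ^ (k + 1) * hsum

lemma padicValuation_sub_factorial_div_mul_bernoulli {p K t : ℕ} [Fact p.Prime] (hK : 2 ≤ K)
    (hKe : Even K) (ht : 0 < t) (hKt : K + t + 1 = p) {x : ℚ}
    (hx : Rat.padicValuation p (K * x - bernoulli' K / K.factorial) < 1) :
    Rat.padicValuation p (x - t.factorial / (t + 1) * bernoulli K) < 1 := by
  have hwilson : Rat.padicValuation p ((t + 1 - K * (K.factorial * t.factorial) : ℤ) : ℚ) < 1 := by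
    rw [padicValuation_intCast_lt_one_iff]
    have hp := congrArg (Nat.cast : ℕ → ZMod p) hKt
    rw [ZMod.natCast_self] at hp
    push_cast at hp ⊢
    rw [natCast_factorial_mul_factorial hKt, hKe.add_one.neg_one_pow]
    linear_combination hp
  have hK1 : Rat.padicValuation p K = 1 :=
    padicValuation_natCast_eq_one_iff.2 (Nat.not_dvd_of_pos_of_lt (by omega) (by omega))
  have hb : bernoulli' K / K.factorial * ((t + 1 : ℕ) : ℚ)⁻¹ ∈ pIntegers p :=
    mul_mem (div_factorial_mem_pIntegers (bernoulli'_mem_pIntegers (by omega)) (by omega))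
      (inv_natCast_mem_pIntegers (Nat.not_dvd_of_pos_of_lt t.succ_pos (by omega)))
  have hsplit : K * (x - t.factorial / (t + 1) * bernoulli' K)
      = (K * x - bernoulli' K / K.factorial) + bernoulli' K / K.factorial * ((t + 1 : ℕ) : ℚ)⁻¹
        * (t + 1 - K * (K.factorial * t.factorial) : ℤ) := by
    have hKf : (K.factorial : ℚ) ≠ 0 := by positivity
    push_cast
    field_simp
    ring
  rw [bernoulli_eq_bernoulli'_of_ne_one (by omega), ← one_mul (Rat.padicValuation p _), ← hK1,
    ← map_mul, hsplit, hK1]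
  exact Valuation.map_add_lt _ hx (padicValuation_mul_lt_one hb hwilson)

end Wilson

section BinomialSum

lemma Cp_mul_zero_eq_sum {p : ℕ} (hp : 0 < p) (hodd : Odd p) (n : ℕ) :
    Cp p (p * n) 0 = ∑ k ∈ range (n + 1), (-1 : ℚ) ^ k * (p * n).choose (p * k) := by
  have himage : (range (p * n + 1)).filter (p ∣ ·) = (range (n + 1)).image (p * ·) := by
    ext k
    simp only [mem_filter, mem_range, mem_image, Nat.lt_succ_iff]
    constructor
    · rintro ⟨hk, i, rfl⟩
      exact ⟨i, Nat.le_of_mul_le_mul_left hk hp, rfl⟩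
    · rintro ⟨i, hi, rfl⟩
      exact ⟨Nat.mul_le_mul_left p hi, dvd_mul_right p i⟩
  simp only [Cp, sub_zero, ← Int.dvd_iff_emod_eq_zero, Int.natCast_dvd_natCast]
  rw [← Finset.sum_filter, himage,
    Finset.sum_image fun _ _ _ _ hij => Nat.eq_of_mul_eq_mul_left hp hij]
  simp only [pow_mul, hodd.neg_one_pow]

lemma two_mul_sum_natCast_mul_of_symm {R : Type*} [Semiring R] {n : ℕ} {a : ℕ → R}
    (ha : ∀ k ≤ n, a (n - k) = a k) :
    2 * ∑ k ∈ range (n + 1), k * a k = n * ∑ k ∈ range (n + 1), a k := by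
  have hreflect : ∑ k ∈ range (n + 1), k * a k = ∑ k ∈ range (n + 1), (n - k : ℕ) * a k := by
    rw [← Finset.sum_range_reflect]
    refine Finset.sum_congr rfl fun k hk => ?_
    rw [Nat.add_sub_cancel, ha k (Nat.lt_succ_iff.1 (mem_range.1 hk))]
  rw [two_mul]
  nth_rewrite 2 [hreflect]
  rw [← Finset.sum_add_distrib, Finset.mul_sum]
  refine Finset.sum_congr rfl fun k hk => ?_
  rw [← add_mul, ← Nat.cast_add, Nat.add_sub_cancel' (Nat.lt_succ_iff.1 (mem_range.1 hk))]

lemma natCast_mul_sum_choose_sub_one {p n : ℕ} (hp : 0 < p) (hn : 0 < n) :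
    n * ∑ k ∈ Icc 1 n, ((p * n - 1).choose (p * k - 1) : ℚ) * (-1 : ℚ) ^ k
      = ∑ k ∈ range (n + 1), (k : ℚ) * ((-1) ^ k * (p * n).choose (p * k)) := by
  rw [Finset.mul_sum, Finset.range_eq_Ico, Finset.sum_eq_sum_Ico_succ_bot n.succ_pos,
    Nat.cast_zero, zero_mul, zero_add]
  refine Finset.sum_congr (by ext k; simp only [mem_Icc, mem_Ico]; omega) fun k hk => ?_
  have hk1 : 0 < k := (mem_Ico.1 hk).1
  have hchoose := Nat.add_one_mul_choose_eq (p * n - 1) (p * k - 1)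
  rw [Nat.sub_add_cancel (Nat.mul_pos hp hn), Nat.sub_add_cancel (Nat.mul_pos hp hk1)] at hchoose
  have hchooseQ : (p * n * (p * n - 1).choose (p * k - 1) : ℚ)
      = (p * n).choose (p * k) * (p * k) := mod_cast hchoose
  have hp0 : (p : ℚ) ≠ 0 := by positivity
  apply mul_left_cancel₀ hp0
  linear_combination (-1 : ℚ) ^ k * hchooseQ

lemma two_mul_sum_choose_sub_one_eq_Cp {p n : ℕ} (hodd : Odd p) (hn : 0 < n) (heven : Even n) :
    2 * ∑ k ∈ Icc 1 n, ((p * n - 1).choose (p * k - 1) : ℚ) * (-1 : ℚ) ^ k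
      = Cp p (p * n) 0 := by
  have hsymm : ∀ k ≤ n, (-1 : ℚ) ^ (n - k) * (p * n).choose (p * (n - k))
      = (-1) ^ k * (p * n).choose (p * k) := fun k hk => by
    have hparity : Even (n - k) ↔ Even k := by simp only [Nat.even_sub hk, heven, true_iff]
    rw [neg_one_pow_congr hparity, Nat.mul_sub, Nat.choose_symm (Nat.mul_le_mul_left p hk)]
  have hn0 : (n : ℚ) ≠ 0 := by positivity
  apply mul_left_cancel₀ hn0
  rw [mul_left_comm, natCast_mul_sum_choose_sub_one hodd.pos hn,
    two_mul_sum_natCast_mul_of_symm hsymm, Cp_mul_zero_eq_sum hodd.pos hodd]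

lemma fdiv_mul_sub_one_eq {p n : ℕ} (hodd : Odd p) (hp : p ≠ 1) (heven : Even n) :
    Int.fdiv ((p * n : ℕ) - 1) ((p : ℤ) - 1) = n + Int.fdiv ((n : ℤ) - 2) ((p : ℤ) - 1) := by
  obtain ⟨e, rfl⟩ := hodd
  obtain ⟨m, rfl⟩ := heven
  have he : (((2 * e + 1 : ℕ) : ℤ) - 1) = 2 * e := by push_cast; ring
  have hnum : (((2 * e + 1) * (m + m) : ℕ) : ℤ) - 1
      = 2 * m - 1 + 2 * e * (m + m : ℕ) := by push_cast; ring
  rw [he, Int.fdiv_eq_ediv_of_nonneg _ (by omega), Int.fdiv_eq_ediv_of_nonneg _ (by omega), hnum,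
    Int.add_mul_ediv_left _ _ (by omega), add_comm, ← Int.ediv_ediv_of_nonneg (by norm_num),
    ← Int.ediv_ediv_of_nonneg (by norm_num)]
  congr 2
  omega

theorem two_mul_sum_choose_sub_one_div {p n : ℕ} (hodd : Odd p) (hp : p ≠ 1) (hn : 0 < n)
    (heven : Even n) :
    (2 * ∑ k ∈ Icc 1 n, ((p * n - 1).choose (p * k - 1) : ℚ) * (-1 : ℚ) ^ k)
        / ((-(p : ℚ)) ^ Int.fdiv ((n : ℤ) - 2) ((p : ℤ) - 1) * (p : ℚ) ^ (n + 1) * n)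
      = Fp p (p * n) 0 / (p * n) := by
  have hp0 : (p : ℚ) ≠ 0 := mod_cast hodd.pos.ne'
  rw [two_mul_sum_choose_sub_one_eq_Cp hodd hn heven, Fp,
    if_neg (Nat.mul_pos hodd.pos hn).ne', fdiv_mul_sub_one_eq hodd hp heven, zpow_neg,
    zpow_add₀ (neg_ne_zero.2 hp0), zpow_natCast, heven.neg_pow, pow_succ]
  field_simp
  ring

end BinomialSum

lemma nLow_mul_add {p t : ℕ} (q : ℕ) (ht : 0 < t) (htp : t ≤ p - 1) :
    nLow p ((p - 1) * q + t) = t := by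
  have hp : ((p - 1 : ℕ) : ℤ) = (p : ℤ) - 1 := by omega
  have hsub : (((p - 1) * q + t : ℕ) : ℤ) - 1 = t - 1 + (p - 1 : ℕ) * q := by push_cast; ring
  rw [nLow, ← hp, hsub, Int.add_mul_emod_self_left, Int.emod_eq_of_lt (by omega) (by omega)]
  omega

lemma exists_even_complement_mod {p n : ℕ} (hp : 1 < p) (hodd : Odd p) (heven : Even n)
    (h : ¬ (p - 1) ∣ n) :
    ∃ q t K, n = (p - 1) * q + t ∧ 0 < t ∧ K + t + 1 = p ∧ 2 ≤ K ∧ Even K := by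
  have hp_even : Even (p - 1) := hodd.tsub_odd odd_one
  have ht_even : Even (n % (p - 1)) := heven.mod_even hp_even
  have ht : n % (p - 1) < p - 1 := Nat.mod_lt _ (Nat.sub_pos_of_lt hp)
  have hK_even : Even (p - 1 - n % (p - 1)) := hp_even.tsub ht_even
  refine ⟨n / (p - 1), n % (p - 1), p - 1 - n % (p - 1), (Nat.div_add_mod _ _).symm,
    Nat.emod_pos_of_not_dvd h, by omega, ?_, hK_even⟩
  exact Nat.le_of_dvd (Nat.sub_pos_of_lt ht) hK_even.two_dvd

theorem stmt6 (p n : ℕ) (hp : p.Prime) (hodd : Odd p) (hn : 0 < n) (heven : Even n)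
    (h : ¬ (p - 1) ∣ n) :
    (2 * ∑ k ∈ Finset.Icc 1 n, ((p*n-1).choose (p*k-1) : ℚ) * (-1:ℚ)^k)
        / ((-(p:ℚ)) ^ (Int.fdiv ((n:ℤ) - 2) ((p:ℤ) - 1)) * (p:ℚ)^(n+1) * (n:ℚ))
      = Fp p (p*n) 0 / ((p:ℚ) * (n:ℚ)) ∧
    modCong p 1 (Fp p (p*n) 0 / ((p:ℚ) * (n:ℚ)))
      (((nLow p n).factorial : ℚ) / ((nLow p n : ℚ) + 1) * bernoulli (p - 1 - nLow p n)) := by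
  refine ⟨two_mul_sum_choose_sub_one_div hodd hp.ne_one hn heven, ?_⟩
  have := Fact.mk hp
  obtain ⟨q, t, K, hnqt, ht, hKt, hK, hKe⟩ := exists_even_complement_mod hp.one_lt hodd heven h
  have hlow : nLow p n = t := by rw [hnqt, nLow_mul_add q ht (by omega)]
  have hcomplement : p - 1 - t = K := by omega
  have hnK : (p - 1) ∣ n + K := ⟨q + 1, by rw [hnqt, mul_add_one]; omega⟩
  have hpn : (p - 1) * (n + q) + t = p * n := by
    rw [mul_add, add_assoc, ← hnqt, ← Nat.succ_mul, Nat.succ_eq_add_one,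
      Nat.sub_add_cancel hp.one_le]
  obtain ⟨φ, hφ, hφK⟩ := exists_isFleckFunctional hp (n + q) ht (by omega : t + K = p - 1)
  rw [hpn] at hφ
  rw [hlow, hcomplement, hφ.Fp_eq hp.one_lt (Nat.mul_pos hp.pos hn)]
  apply modCong_one_of_padicValuation_lt_one
  apply padicValuation_sub_factorial_div_mul_bernoulli hK hKe ht hKt
  exact hφ.padicValuation_apply_one_div_sub_bernoulli' h hK (by omega) hKe hnK hφK
end

section
/- Let p be an odd prime and let n be a positive even integer with (p−1) ∤ n. Let b,m be positive integers with b > 2·⌊(pn−1)/(p−1)⌋. Then (2/(pn))·(pn−1)!·S(m·φ(p^b), pn−1)/(−p)^{⌊(pn−2)/(p−1)⌋} ≡ −(pn−1)!·S(m·φ(p^b), pn)/(−p)^{⌊(pn−1)/(p−1)⌋} ≡ (n_*!/(n_*+1))·B_{p−1−n_*} (mod p). -/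
open Finset

/-- Stirling number of the second kind,
`S(M,N) = (1/N!) ∑_{j=0}^N (-1)^{N-j} binom(N,j) j^M`. -/
def stirling2 (M N : ℕ) : ℚ :=
  (1 / (N.factorial : ℚ)) * ∑ j ∈ range (N+1), (-1:ℚ)^(N-j) * (N.choose j : ℚ) * (j:ℚ)^M

/-!
Let `F N` be the Fleck sum over the multiples of `p`. By Fermat–Euler, `N! * S(M, N)` is congruent
to `-F N` modulo `p ^ b` when `φ (p ^ b) ∣ M`, and for even `N` divisible by `p` the reflection
`j ↦ N - j` gives `F N = -2 * F (N - 1)`. So everything reduces to `F N` modulo a power of `p`.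

As `F N` is the coefficient of `1` in `(x - 1) ^ N` over the group ring `ℤ[x] / (x ^ p - 1)`, a
geometric series shows that `F` has generating function
`(1 + X) ^ (p - 1) / ((1 + X) ^ p - X ^ p)`, which makes `p * F N / N` the negative of the `N`-th
coefficient of `log ((1 + X) ^ p - X ^ p) = log (1 + p * X * G)`, with `G` an integral polynomial.
Modulo the relevant power of `p`, only the power `(X * G) ^ (e + 1)` contributes, where
`e = ⌊N / (p - 1)⌋`: lower powers have too small a degree, higher powers are too divisible by `p`.
As `X * G` is a palindrome, the coefficient in question is also the `j`-th coefficient of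
`G ^ (e + 1)` with `j = (e + 1) * (p - 1) - N < p - 1`. In this range `G` agrees modulo `p` with
`log (1 + X) / X`, and `p ∣ e + 1 + j` turns `G ^ (e + 1)` into `(X / log (1 + X)) ^ j`, whose
`j`-th coefficient is `B_j / j!` by Lagrange inversion (up to the sign of `B_1`). Wilson's theorem
rewrites the remaining factorials.
-/

/-- Fleck's alternating sum of the binomial coefficients `binom(N, j)` over the multiples `j` of
`p`, with the sign `(-1)^(N-j)` of `stirling2` instead of the customary `(-1)^j`. -/
def fleckSum (p N : ℕ) : ℤ :=
  ∑ j ∈ range (N + 1) with p ∣ j, (-1) ^ (N - j) * (N.choose j : ℤ)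

theorem choose_succ_eq_choose_add_choose_sub {M j : ℕ} (hj : j ≤ M + 1) :
    (M + 1).choose j = M.choose j + M.choose (M + 1 - j) := by
  obtain _ | i := j
  · simp
  · rw [Nat.choose_succ_succ, Nat.add_sub_add_right, Nat.choose_symm (by omega), add_comm]

theorem fleckSum_eq_neg_two_mul {p N : ℕ} (hN : 0 < N) (heven : Even N) (hpN : p ∣ N) :
    fleckSum p N = -(2 * fleckSum p (N - 1)) := by
  obtain ⟨M, rfl⟩ : ∃ M, N = M + 1 := ⟨N - 1, by omega⟩
  set t : ℕ → ℤ := fun j => if p ∣ j then (-1) ^ (M + 1 - j) * (M.choose j : ℤ) else 0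
  have hpred : fleckSum p M = -∑ j ∈ range (M + 2), t j := by
    rw [fleckSum, sum_filter, sum_range_succ _ (M + 1)]
    simp only [t, Nat.choose_succ_self, Nat.cast_zero, mul_zero, ite_self, add_zero]
    rw [← sum_neg_distrib]
    refine sum_congr rfl fun j hj => ?_
    rw [Nat.succ_sub (by grind), pow_succ]
    split_ifs <;> ring
  have hsum : fleckSum p (M + 1) = ∑ j ∈ range (M + 2), (t j + t (M + 1 - j)) := by
    rw [fleckSum, sum_filter]
    refine sum_congr rfl fun j hj => ?_
    have hj : j ≤ M + 1 := by grind
    have hsign : (-1 : ℤ) ^ (M + 1 - (M + 1 - j)) = (-1) ^ (M + 1 - j) := by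
      rw [Nat.sub_sub_self hj]
      exact (neg_one_pow_congr (by grind [Nat.even_sub]))
    simp only [t, Nat.dvd_sub_iff_right hj hpN, hsign,
      choose_succ_eq_choose_add_choose_sub hj]
    split_ifs
    · push_cast
      ring
    · ring
  have hreflect : ∑ j ∈ range (M + 2), t (M + 1 - j) = ∑ j ∈ range (M + 2), t j :=
    sum_range_reflect t (M + 2)
  rw [hsum, sum_add_distrib, hreflect, Nat.add_sub_cancel, hpred]
  ring

theorem map_sub_one_pow_eq_fleckSum {A : Type*} [CommRing A] {p : ℕ} {x : A} (l : A →+ ℤ)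
    (hl : ∀ k, l (x ^ k) = if p ∣ k then 1 else 0) (N : ℕ) :
    l ((x - 1) ^ N) = fleckSum p N := by
  rw [sub_eq_add_neg, add_pow, map_sum, fleckSum, sum_filter]
  refine sum_congr rfl fun j _ => ?_
  have hsmul : x ^ j * (-1) ^ (N - j) * (N.choose j : A) =
      ((-1) ^ (N - j) * (N.choose j : ℤ)) • x ^ j := by
    rw [zsmul_eq_mul]
    push_cast
    ring
  rw [hsmul, map_zsmul, hl, smul_eq_mul, mul_ite, mul_one, mul_zero]

section

open PowerSeries

theorem mk_sub_one_pow_mul {A : Type*} [CommRing A] {p : ℕ} {x : A} (hx : x ^ p = 1) :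
    mk (fun N => (x - 1) ^ N) * ((1 + X) ^ p - X ^ p) =
      ∑ i ∈ range p, C (x ^ (p - 1 - i)) * ((1 + X) ^ i * X ^ (p - 1 - i)) := by
  have hgeom : mk (fun N => (x - 1) ^ N) * (1 + X - C x * X) = 1 := by
    ext n
    obtain _ | n := n
    · simp
    · rw [add_sub_assoc, ← one_sub_mul, mul_add, mul_one, ← mul_assoc, map_add,
        coeff_succ_mul_X, ← map_one C, ← map_sub, coeff_mul_C]
      simp only [coeff_mk, coeff_C, Nat.succ_ne_zero, if_false]
      ring
  have hfactor : (1 + X : A⟦X⟧) ^ p - X ^ p =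
      (∑ i ∈ range p, (1 + X) ^ i * (C x * X) ^ (p - 1 - i)) * (1 + X - C x * X) := by
    rw [geom_sum₂_mul, mul_pow, ← map_pow, hx, map_one, one_mul]
  rw [hfactor, mul_left_comm, hgeom, mul_one]
  refine sum_congr rfl fun i _ => ?_
  rw [mul_pow, map_pow]
  ring

theorem mk_fleckSum_mul_of_addMonoidHom {A : Type*} [CommRing A] {p : ℕ} (hp : 0 < p) {x : A}
    (hx : x ^ p = 1) (l : A →+ ℤ) (hl : ∀ k, l (x ^ k) = if p ∣ k then 1 else 0) :
    mk (fleckSum p) * ((1 + X) ^ p - X ^ p) = (1 + X) ^ (p - 1) := by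
  let L : A⟦X⟧ →+ ℤ⟦X⟧ :=
    { toFun := fun f => mk fun n => l (coeff n f)
      map_zero' := by ext; simp
      map_add' := fun f g => by ext; simp }
  have hL (f : A⟦X⟧) (g : ℤ⟦X⟧) :
      L (f * g.map (Int.castRingHom A)) = L f * g := by
    ext n
    simp only [L, AddMonoidHom.coe_mk, ZeroHom.coe_mk, coeff_mk, coeff_mul,
      coeff_map, map_sum, eq_intCast, ← zsmul_eq_mul', map_zsmul, smul_eq_mul,
      mul_comm (coeff _ g)]
  have hLmk : L (mk fun N => (x - 1) ^ N) = mk (fleckSum p) := by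
    ext N
    simp [L, map_sub_one_pow_eq_fleckSum l hl]
  have hLC (k : ℕ) : L (C (x ^ k)) = if p ∣ k then 1 else 0 := by
    ext n
    have hconst : l (coeff n (C (x ^ k))) = if n = 0 then l (x ^ k) else 0 := by
      rw [coeff_C, apply_ite l, map_zero]
    simp only [L, AddMonoidHom.coe_mk, ZeroHom.coe_mk, coeff_mk, hconst, hl]
    split_ifs <;> simp_all [coeff_one]
  have key := congrArg L (mk_sub_one_pow_mul hx)
  have hcast (i k : ℕ) : (1 + X : A⟦X⟧) ^ i * X ^ k =
      ((1 + X : ℤ⟦X⟧) ^ i * X ^ k).map (Int.castRingHom A) := by simp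
  have hcast' : (1 + X : A⟦X⟧) ^ p - X ^ p =
      ((1 + X : ℤ⟦X⟧) ^ p - X ^ p).map (Int.castRingHom A) := by simp
  rw [hcast', hL, hLmk, map_sum] at key
  rw [key, sum_eq_single_of_mem (p - 1) (by grind)]
  · rw [hcast, hL, hLC, if_pos (by simp)]
    simp
  · intro i hi hne
    rw [hcast, hL, hLC, if_neg (Nat.not_dvd_of_pos_of_lt (by grind) (by grind)), zero_mul]

theorem mk_fleckSum_mul {p : ℕ} (hp : 0 < p) :
    mk (fleckSum p) * ((1 + X) ^ p - X ^ p) = (1 + X) ^ (p - 1) := by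
  have hpow (k : ℕ) : (AddMonoidAlgebra.single (1 : ZMod p) (1 : ℤ)) ^ k =
      AddMonoidAlgebra.single (k : ZMod p) 1 := by
    rw [AddMonoidAlgebra.single_pow, one_pow, nsmul_one]
  refine mk_fleckSum_mul_of_addMonoidHom hp (x := AddMonoidAlgebra.single (1 : ZMod p) 1) ?_
    { toFun := fun a => a.coeff 0, map_zero' := rfl, map_add' := fun a b => rfl } fun k => ?_
  · rw [hpow, ZMod.natCast_self, AddMonoidAlgebra.one_def]
  · rw [hpow]
    exact Finsupp.single_apply.trans (by simp only [ZMod.natCast_eq_zero_iff])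

theorem one_add_X_mul_derivative_log (A : Type*) [CommRing A] [Algebra ℚ A] :
    (1 + X) * d⁄dX A (log A) = 1 := by
  rw [deriv_log]
  ext n
  rw [add_mul, one_mul]
  cases n with
  | zero => simp
  | succ n => simp [coeff_succ_X_mul, coeff_one, pow_succ]

theorem one_add_mul_derivative_log_subst {A : Type*} [CommRing A] [Algebra ℚ A] {g : A⟦X⟧}
    (hg : constantCoeff g = 0) :
    (1 + g) * d⁄dX A ((log A).subst g) = d⁄dX A g := by
  have hsubst := HasSubst.of_constantCoeff_zero' hg
  have hone : (1 + X : A⟦X⟧).subst g = 1 + g := by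
    rw [subst_add hsubst, subst_X hsubst, ← coe_substAlgHom hsubst, map_one]
  have hlog := congrArg (subst g) (one_add_X_mul_derivative_log A)
  rw [subst_mul hsubst, hone, ← coe_substAlgHom hsubst, map_one, coe_substAlgHom] at hlog
  rw [derivative_subst hsubst, ← mul_assoc, hlog, one_mul]

theorem coeff_subst_eq_sum {R : Type*} [CommRing R] (f : R⟦X⟧) {g : R⟦X⟧}
    (hg : constantCoeff g = 0) {m N : ℕ} (hm : m < N) :
    coeff m (f.subst g) = ∑ d ∈ range N, coeff d f * coeff m (g ^ d) := by
  rw [coeff_subst' (HasSubst.of_constantCoeff_zero' hg)]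
  refine finsum_eq_sum_of_support_subset _ fun d hd => ?_
  by_contra hdN
  have hX : (X : R⟦X⟧) ^ d ∣ g ^ d := pow_dvd_pow_of_dvd (X_dvd_iff.2 hg) d
  have hzero := X_pow_dvd_iff.1 hX m (hm.trans_le (by simpa using hdN))
  exact hd (by simp only [hzero, smul_zero])

theorem coeff_subst_mul_eq_sum {R : Type*} [CommRing R] (f : R⟦X⟧) {g : R⟦X⟧}
    (hg : constantCoeff g = 0) (h : R⟦X⟧) (N : ℕ) :
    coeff N (f.subst g * h) = ∑ d ∈ range (N + 1), coeff d f * coeff N (g ^ d * h) := by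
  simp only [coeff_mul, mul_sum, ← mul_assoc]
  rw [sum_comm]
  refine sum_congr rfl fun ij hij => ?_
  have hle : ij.1 < N + 1 := Nat.lt_succ_of_le (HasAntidiagonal.antidiagonal.fst_le hij)
  rw [coeff_subst_eq_sum f hg hle, sum_mul]

theorem constantCoeff_subst_of_constantCoeff_eq_zero {R : Type*} [CommRing R] (f : R⟦X⟧)
    {g : R⟦X⟧} (hg : constantCoeff g = 0) :
    constantCoeff (f.subst g) = constantCoeff f := by
  have := coeff_subst_eq_sum f hg zero_lt_one
  simpa using this

theorem exp_subst_log (A : Type*) [CommRing A] [Algebra ℚ A] :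
    (exp A).subst (log A) = 1 + X := by
  have : IsAddTorsionFree A := .of_module_rat A
  set E := (exp A).subst (log A)
  have hE : (1 + X) * d⁄dX A E = E := by
    rw [derivative_subst HasSubst.log, derivative_exp, mul_left_comm,
      one_add_X_mul_derivative_log, mul_one]
  have hconst : constantCoeff E = 1 := by
    rw [constantCoeff_subst_of_constantCoeff_eq_zero _ constantCoeff_log, constantCoeff_exp]
  have hderiv : d⁄dX A E = 1 := by
    refine derivative.ext ?_ (by simpa [hconst] using congrArg constantCoeff hE)
    have hunit : IsUnit (1 + X : A⟦X⟧) := isUnit_iff_constantCoeff.2 (by simp)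
    have hE' := congrArg (d⁄dX A) hE
    rw [Derivation.leibniz, smul_eq_mul, smul_eq_mul, map_add, derivative_X,
      Derivation.map_one_eq_zero, zero_add, mul_one, add_eq_right] at hE'
    rw [Derivation.map_one_eq_zero, ← hunit.mul_right_eq_zero, hE']
  exact derivative.ext (by simp [hderiv]) (by simp [hconst])

theorem natCast_mul_fleckSum_eq_neg_mul_coeff_log_subst {p N : ℕ} (hp : 0 < p) (hN : 0 < N) :
    (p * fleckSum p N : ℚ) = -(N * coeff N ((log ℚ).subst ((1 + X) ^ p - X ^ p - 1 : ℚ⟦X⟧))) := by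
  obtain ⟨M, rfl⟩ : ∃ M, N = M + 1 := ⟨N - 1, by omega⟩
  obtain ⟨q, rfl⟩ : ∃ q, p = q + 1 := ⟨p - 1, by omega⟩
  set F : ℚ⟦X⟧ := (mk (fleckSum (q + 1))).map (Int.castRingHom ℚ) with hF
  set g : ℚ⟦X⟧ := (1 + X) ^ (q + 1) - X ^ (q + 1) - 1 with hg
  have hg0 : constantCoeff g = 0 := by simp [hg]
  have hgen : F * (1 + g) = (1 + X) ^ q := by
    have := congrArg (PowerSeries.map (Int.castRingHom ℚ)) (mk_fleckSum_mul hp)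
    simpa [hF, hg] using this
  have hderiv : d⁄dX ℚ g = C ((q + 1 : ℕ) : ℚ) * ((1 + X) ^ q - X ^ q) := by
    rw [hg, map_sub, map_sub, derivative_pow, derivative_pow]
    simp only [derivative_X, map_add, Derivation.map_one_eq_zero, Nat.add_sub_cancel, map_natCast]
    ring
  have hlog : X * d⁄dX ℚ ((log ℚ).subst g) = C ((q + 1 : ℕ) : ℚ) * (1 - F) := by
    have hunit : IsUnit (1 + g) := isUnit_iff_constantCoeff.2 (by simp [hg0])
    refine hunit.mul_left_cancel ?_
    linear_combination X * one_add_mul_derivative_log_subst hg0 + X * hderiv +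
      C ((q + 1 : ℕ) : ℚ) * (hgen + hg)
  have hcoeff := congrArg (coeff (M + 1)) hlog
  rw [coeff_succ_X_mul, coeff_derivative, coeff_C_mul, map_sub, coeff_one, hF, coeff_map, coeff_mk,
    if_neg M.succ_ne_zero] at hcoeff
  simp only [eq_intCast] at hcoeff
  push_cast at hcoeff ⊢
  linear_combination hcoeff

theorem coeff_derivative_mul_pow {A : Type*} [CommRing A] [IsAddTorsionFree A] {g Y : A⟦X⟧}
    (hg : constantCoeff g = 0) (hgY : g * Y = X) (m : ℕ) :
    coeff m (d⁄dX A g * Y ^ (m + 1)) = if m = 0 then 1 else 0 := by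
  have hderiv : d⁄dX A g * Y + g * d⁄dX A Y = 1 := by
    simpa [Derivation.leibniz, mul_comm, add_comm] using congrArg (d⁄dX A) hgY
  obtain _ | k := m
  · simpa [hg] using congrArg constantCoeff hderiv
  · have hexp : (k + 1) • (d⁄dX A g * Y ^ (k + 2)) =
        (k + 1) • Y ^ (k + 1) - X * d⁄dX A (Y ^ (k + 1)) := by
      rw [derivative_pow, Nat.add_sub_cancel, nsmul_eq_mul, nsmul_eq_mul]
      linear_combination ((k + 1 : ℕ) : A⟦X⟧) * (Y ^ (k + 1) * hderiv - d⁄dX A Y * Y ^ k * hgY)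
    have hcoeff := congrArg (coeff (k + 1)) hexp
    rw [map_sub, map_nsmul, map_nsmul, coeff_succ_X_mul, coeff_derivative, ← Nat.cast_succ,
      ← nsmul_eq_mul', sub_self] at hcoeff
    rw [if_neg k.succ_ne_zero]
    exact (smul_eq_zero_iff_right k.succ_ne_zero).1 hcoeff

-- Invariance of the residue under the change of variable `g`, where `Y` stands for `X / g`.
theorem coeff_subst_mul_derivative_mul_pow {A : Type*} [CommRing A] [IsAddTorsionFree A]
    {g Y : A⟦X⟧} (hg : constantCoeff g = 0) (hgY : g * Y = X) (f : A⟦X⟧) (j : ℕ) :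
    coeff j (f.subst g * (d⁄dX A g * Y ^ (j + 1))) = coeff j f := by
  have hterm {d : ℕ} (hd : d ≤ j) :
      coeff j (g ^ d * (d⁄dX A g * Y ^ (j + 1))) = if j - d = 0 then 1 else 0 := by
    obtain ⟨m, rfl⟩ := Nat.exists_eq_add_of_le hd
    have hX : g ^ d * (d⁄dX A g * Y ^ (d + m + 1)) = X ^ d * (d⁄dX A g * Y ^ (m + 1)) := by
      rw [← hgY, mul_pow]
      ring
    rw [hX, coeff_X_pow_mul', if_pos hd, Nat.add_sub_cancel_left,
      coeff_derivative_mul_pow hg hgY]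
  rw [coeff_subst_mul_eq_sum f hg, sum_range_succ, hterm le_rfl, sum_eq_zero]
  · simp
  · intro d hd
    have := mem_range.1 hd
    rw [hterm this.le, if_neg (by omega), mul_zero]

theorem coeff_pow_eq_bernoulli'_div_factorial {Y : ℚ⟦X⟧} (hY : log ℚ * Y = X) (j : ℕ) :
    coeff j (Y ^ j) = bernoulli' j / j.factorial := by
  have hber : (bernoulli'PowerSeries ℚ).subst (log ℚ) * X = log ℚ * (1 + X) := by
    have hsubst := congrArg (substAlgHom (HasSubst.log (A := ℚ)))
      (bernoulli'PowerSeries_mul_exp_sub_one ℚ)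
    simpa only [map_mul, map_sub, map_one, coe_substAlgHom, exp_subst_log, subst_X HasSubst.log,
      add_sub_cancel_left] using hsubst
  have hone : (bernoulli'PowerSeries ℚ).subst (log ℚ) * d⁄dX ℚ (log ℚ) * Y = 1 := by
    refine mul_left_cancel₀ X_ne_zero ?_
    linear_combination d⁄dX ℚ (log ℚ) * Y * hber + log ℚ * Y * one_add_X_mul_derivative_log ℚ + hY
  have hcoeff := coeff_subst_mul_derivative_mul_pow constantCoeff_log hY (bernoulli'PowerSeries ℚ) j
  rwa [pow_succ', ← mul_assoc, ← mul_assoc, hone, one_mul, bernoulli'PowerSeries, coeff_mk,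
    eq_ratCast, Rat.cast_id] at hcoeff

end

section ModCong

variable {p : ℕ} [Fact p.Prime] {c : ℤ} {x y z : ℚ}

theorem modCong_iff_norm_sub_le :
    modCong p c x y ↔ ‖(x - y : ℚ_[p])‖ ≤ (p : ℝ) ^ (-c) := by
  have hp : 1 < (p : ℝ) := mod_cast (Fact.out : p.Prime).one_lt
  rw [modCong, ← Rat.cast_sub, ← sub_eq_zero]
  by_cases hxy : x - y = 0
  · simp only [hxy, true_or, Rat.cast_zero, norm_zero, true_iff]
    positivity
  · rw [Padic.eq_padicNorm, padicNorm.eq_zpow_of_nonzero hxy, Rat.cast_zpow, Rat.cast_natCast,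
      zpow_le_zpow_iff_right₀ hp, neg_le_neg_iff, or_iff_right hxy]

theorem modCong_one_iff_norm_sub_lt_one :
    modCong p 1 x y ↔ ‖(x - y : ℚ_[p])‖ < 1 := by
  rw [modCong_iff_norm_sub_le, Padic.norm_le_pow_iff_norm_lt_pow_add_one, neg_add_cancel, zpow_zero]

theorem modCong_refl (p : ℕ) (c : ℤ) (x : ℚ) : modCong p c x x := Or.inl rfl

theorem modCong.symm (h : modCong p c x y) : modCong p c y x := by
  rw [modCong_iff_norm_sub_le] at h ⊢
  rwa [norm_sub_rev]

theorem modCong.trans (hxy : modCong p c x y) (hyz : modCong p c y z) : modCong p c x z := by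
  rw [modCong_iff_norm_sub_le] at hxy hyz ⊢
  rw [← sub_add_sub_cancel (x : ℚ_[p]) y z]
  exact (IsUltrametricDist.norm_add_le_max _ _).trans (max_le hxy hyz)

theorem modCong.neg (h : modCong p c x y) : modCong p c (-x) (-y) := by
  rw [modCong_iff_norm_sub_le] at h ⊢
  rwa [Rat.cast_neg, Rat.cast_neg, neg_sub_neg, norm_sub_rev]

theorem modCong.sum {ι : Type*} {s : Finset ι} {f g : ι → ℚ}
    (h : ∀ i ∈ s, modCong p c (f i) (g i)) : modCong p c (∑ i ∈ s, f i) (∑ i ∈ s, g i) := by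
  simp only [modCong_iff_norm_sub_le] at h ⊢
  rw [Rat.cast_sum, Rat.cast_sum, ← sum_sub_distrib]
  exact IsUltrametricDist.norm_sum_le_of_forall_le_of_nonneg (by positivity) h

theorem modCong.mul_left {a : ℚ} (ha : ‖(a : ℚ_[p])‖ ≤ 1) (h : modCong p c x y) :
    modCong p c (a * x) (a * y) := by
  rw [modCong_iff_norm_sub_le] at h ⊢
  rw [Rat.cast_mul, Rat.cast_mul, ← mul_sub, norm_mul]
  exact (mul_le_of_le_one_left (norm_nonneg _) ha).trans h

theorem modCong.div {b : ℤ} {d : ℚ} (hd : c + padicValRat p d ≤ b) (h : modCong p b x y) :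
    modCong p c (x / d) (y / d) := by
  obtain rfl | hxy := eq_or_ne x y
  · exact modCong_refl p c _
  obtain rfl | hd0 := eq_or_ne d 0
  · simpa using modCong_refl p c 0
  refine Or.inr ?_
  rw [← sub_div, padicValRat.div (sub_ne_zero.2 hxy) hd0]
  have := h.resolve_left hxy
  omega

theorem modCong.div_natCast {d : ℕ} (hd : ¬p ∣ d) (h : modCong p c x y) :
    modCong p c (x / d) (y / d) :=
  h.div (by rw [padicValRat.of_nat, padicValNat.eq_zero_of_not_dvd hd, Nat.cast_zero, add_zero])

theorem modCong_intCast_iff_dvd_sub {b : ℕ} {m n : ℤ} :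
    modCong p b m n ↔ (p ^ b : ℤ) ∣ m - n := by
  rw [modCong_iff_norm_sub_le, ← Padic.norm_int_le_pow_iff_dvd]
  push_cast
  rfl

end ModCong

theorem pow_modEq_ite_of_totient_dvd {p b M : ℕ} (hp : p.Prime) (hM : 0 < M)
    (hdvd : Nat.totient (p ^ b) ∣ M) (j : ℕ) :
    j ^ M ≡ if p ∣ j then 0 else 1 [MOD p ^ b] := by
  split_ifs with hj
  · have hb : b ≤ M := by
      obtain rfl | hb := b.eq_zero_or_pos
      · exact M.zero_le
      · calc b ≤ p ^ (b - 1) := by have := Nat.lt_pow_self hp.one_lt (n := b - 1); omega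
          _ ≤ p ^ (b - 1) * (p - 1) := Nat.le_mul_of_pos_right _ (Nat.sub_pos_of_lt hp.one_lt)
          _ = Nat.totient (p ^ b) := (Nat.totient_prime_pow hp hb).symm
          _ ≤ M := Nat.le_of_dvd hM hdvd
    exact Nat.modEq_zero_iff_dvd.2 ((pow_dvd_pow p hb).trans (pow_dvd_pow_of_dvd hj M))
  · obtain ⟨m, rfl⟩ := hdvd
    have hcop : Nat.Coprime j (p ^ b) := ((hp.coprime_iff_not_dvd.2 hj).symm).pow_right b
    simpa [pow_mul] using (Nat.ModEq.pow_totient hcop).pow m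

theorem factorial_mul_stirling2 (M N : ℕ) :
    (N.factorial : ℚ) * stirling2 M N =
      ((∑ j ∈ range (N + 1), (-1) ^ (N - j) * (N.choose j : ℤ) * (j : ℤ) ^ M : ℤ) : ℚ) := by
  rw [stirling2, ← mul_assoc, mul_one_div_cancel (by exact_mod_cast N.factorial_ne_zero), one_mul]
  push_cast
  rfl

theorem modCong_factorial_mul_stirling2 {p b M N : ℕ} [Fact p.Prime] (hM : 0 < M) (hN : 0 < N)
    (hdvd : Nat.totient (p ^ b) ∣ M) :
    modCong p b (N.factorial * stirling2 M N) (-fleckSum p N) := by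
  have hzero : ∑ j ∈ range (N + 1), (-1 : ℤ) ^ (N - j) * (N.choose j : ℤ) = 0 := by
    simpa [zero_pow hN.ne'] using (add_pow (1 : ℤ) (-1) N).symm
  have hfleck : -fleckSum p N = ∑ j ∈ range (N + 1),
      (-1) ^ (N - j) * (N.choose j : ℤ) * (if p ∣ j then 0 else 1 : ℕ) := by
    rw [fleckSum, sum_filter, ← sub_eq_zero, ← neg_add', neg_eq_zero, ← sum_add_distrib]
    refine (sum_congr rfl fun j _ => ?_).trans hzero
    split_ifs <;> simp
  rw [factorial_mul_stirling2, ← Int.cast_neg, hfleck, modCong_intCast_iff_dvd_sub,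
    ← sum_sub_distrib]
  refine dvd_sum fun j _ => ?_
  have hpow := (pow_modEq_ite_of_totient_dvd Fact.out hM hdvd j).symm.dvd
  rw [← mul_sub]
  exact (mod_cast hpow : ((p : ℤ) ^ b) ∣ _).mul_left _

section

open Polynomial

/-- The polynomial `((1 + X) ^ p - X ^ p - 1) / (p X)`, for `p` prime. -/
noncomputable def binomQuot (p : ℕ) : ℤ[X] :=
  ∑ i ∈ range (p - 1), monomial i ((p.choose (i + 1) / p : ℕ) : ℤ)

theorem reflect_pow {R : Type*} [CommSemiring R] {f : R[X]} {n : ℕ} (hf : f.natDegree ≤ n)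
    (K : ℕ) : reflect (K * n) (f ^ K) = reflect n f ^ K := by
  induction K with
  | zero => simp
  | succ K ih =>
    rw [pow_succ, pow_succ, add_one_mul, reflect_mul _ _ (natDegree_pow_le_of_le K hf) hf, ih]

theorem natCast_dvd_mul_coeff_pow {R : Type*} [CommSemiring R] (f : R[X]) (K J : ℕ) :
    (K : R) ∣ J * (f ^ K).coeff J := by
  obtain _ | J := J
  · simp
  · have hderiv := congrArg (coeff · J) (derivative_pow f K)
    simp only [coeff_derivative, mul_assoc, coeff_C_mul] at hderiv
    exact ⟨_, by rw [mul_comm, Nat.cast_succ, hderiv]⟩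

namespace binomQuot

variable {p : ℕ}

theorem coeff_eq (p i : ℕ) :
    (binomQuot p).coeff i = if i < p - 1 then ((p.choose (i + 1) / p : ℕ) : ℤ) else 0 := by
  simp [binomQuot, coeff_monomial]

theorem natCast_mul_coeff_X_mul (hp : p.Prime) (i : ℕ) :
    (p : ℤ) * (X * binomQuot p).coeff i = if 0 < i ∧ i < p then (p.choose i : ℤ) else 0 := by
  cases i with
  | zero => simp
  | succ i =>
    rw [coeff_X_mul, coeff_eq]
    by_cases h : i + 1 < p
    · rw [if_pos (by omega), if_pos ⟨by omega, h⟩]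
      exact_mod_cast Nat.mul_div_cancel' (hp.dvd_choose_self (by omega) h)
    · rw [if_neg (by omega), if_neg (by tauto), mul_zero]

theorem natCast_mul_X_mul (hp : p.Prime) :
    (p : ℤ[X]) * (X * binomQuot p) = (1 + X) ^ p - X ^ p - 1 := by
  ext i
  rw [← C_eq_natCast, coeff_C_mul, natCast_mul_coeff_X_mul hp, coeff_sub, coeff_sub,
    coeff_one_add_X_pow, coeff_X_pow, coeff_one]
  obtain rfl | hi := i.eq_zero_or_pos
  · simp [hp.ne_zero.symm]
  · obtain h | rfl | h := lt_trichotomy i p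
    · simp [hi, h, h.ne, hi.ne']
    · simp [hi.ne']
    · simp [h.not_gt, h.ne', hi.ne', Nat.choose_eq_zero_of_lt h]

theorem natDegree_X_mul_le (hp : p.Prime) : (X * binomQuot p).natDegree ≤ p := by
  refine natDegree_le_iff_coeff_eq_zero.2 fun i hi => ?_
  have hp0 : (p : ℤ) ≠ 0 := mod_cast hp.ne_zero
  refine mul_left_cancel₀ hp0 ?_
  rw [natCast_mul_coeff_X_mul hp, if_neg (by omega), mul_zero]

theorem reflect_X_mul (hp : p.Prime) : reflect p (X * binomQuot p) = X * binomQuot p := by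
  ext i
  have hp0 : (p : ℤ) ≠ 0 := mod_cast hp.ne_zero
  refine mul_left_cancel₀ hp0 ?_
  rw [coeff_reflect, natCast_mul_coeff_X_mul hp, natCast_mul_coeff_X_mul hp]
  obtain h | h := le_or_gt i p
  · rw [revAt_le h, Nat.choose_symm h]
    exact if_congr (by omega) rfl rfl
  · rw [revAt_eq_self_of_lt h]

theorem coeff_X_mul_pow (hp : p.Prime) {K N j : ℕ} (hj : K * (p - 1) = N + j) :
    ((X * binomQuot p) ^ K).coeff N = (binomQuot p ^ K).coeff j := by
  have hpK : K * p = j + K + N := by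
    rw [← Nat.sub_add_cancel hp.one_le, mul_add_one, hj]
    ring
  rw [← reflect_X_mul hp, ← reflect_pow (natDegree_X_mul_le hp), coeff_reflect,
    revAt_le (by omega), hpK, Nat.add_sub_cancel, mul_pow, coeff_X_pow_mul]

theorem coeff_X_mul_pow_eq_zero (hp : p.Prime) {K N : ℕ} (hN : K * (p - 1) < N) :
    ((X * binomQuot p) ^ K).coeff N = 0 := by
  have hpK : K * p = K * (p - 1) + K := by
    rw [← mul_add_one, Nat.sub_add_cancel hp.one_le]
  obtain h | h := le_or_gt N (K * p)
  · rw [← reflect_X_mul hp, ← reflect_pow (natDegree_X_mul_le hp), coeff_reflect, revAt_le h,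
      mul_pow, coeff_X_pow_mul', if_neg (by omega)]
  · exact coeff_eq_zero_of_natDegree_lt
      ((natDegree_pow_le_of_le K (natDegree_X_mul_le hp)).trans_lt h)

theorem add_one_mul_coeff (hp : p.Prime) {i : ℕ} (hi : i < p - 1) :
    ((i + 1 : ℕ) : ℤ) * (binomQuot p).coeff i = (p - 1).choose i := by
  have hdiv : p * (p.choose (i + 1) / p) = p.choose (i + 1) :=
    Nat.mul_div_cancel' (hp.dvd_choose_self (by omega) (by omega))
  have habsorb := Nat.add_one_mul_choose_eq (p - 1) i
  rw [Nat.sub_add_cancel hp.one_le] at habsorb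
  rw [coeff_eq, if_pos hi]
  norm_cast
  exact Nat.eq_of_mul_eq_mul_left hp.pos (by linear_combination (i + 1) * hdiv - habsorb)

end binomQuot

end

theorem cast_choose_pred_eq_neg_one_pow {p : ℕ} [Fact p.Prime] {k : ℕ} (hk : k < p) :
    ((p - 1).choose k : ZMod p) = (-1) ^ k := by
  have hfac : (k.factorial : ZMod p) ≠ 0 := by
    rwa [Ne, ZMod.natCast_eq_zero_iff, (Fact.out : p.Prime).dvd_factorial, not_le]
  refine mul_left_cancel₀ hfac ?_
  rw [← Nat.cast_mul, ← Nat.descFactorial_eq_factorial_mul_choose,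
    ZMod.cast_descFactorial hk.le, mul_comm]

theorem cast_factorial_mul_factorial_eq_neg_one_pow {p : ℕ} [Fact p.Prime] {a b : ℕ}
    (hab : a + b = p - 1) : (a.factorial * b.factorial : ZMod p) = (-1) ^ (b + 1) := by
  have hwilson := ZMod.wilsons_lemma p
  have hp := (Fact.out : p.Prime).pos
  rw [← hab, ← Nat.add_choose_mul_factorial_mul_factorial, hab, Nat.cast_mul, Nat.cast_mul,
    cast_choose_pred_eq_neg_one_pow (by omega), mul_assoc] at hwilson
  calc (a.factorial * b.factorial : ZMod p)
      = (-1) ^ b * ((-1) ^ b * (a.factorial * b.factorial)) := by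
        rw [← mul_assoc, ← pow_add, Even.neg_one_pow ⟨b, rfl⟩, one_mul]
    _ = (-1) ^ (b + 1) := by rw [hwilson, pow_succ]

theorem dvd_pow_sub_pow_of_mul_eq_one {R : Type*} [CommRing R] {d a a' b b' : R}
    (hd : d ∣ a - b) (ha : a * a' = 1) (hb : b * b' = 1) (k : ℕ) : d ∣ a' ^ k - b' ^ k := by
  refine dvd_trans ?_ (sub_dvd_pow_sub_pow _ _ _)
  have hdiff : a' - b' = -(a' * b') * (a - b) := by linear_combination b' * ha - a' * hb
  rw [hdiff]
  exact hd.mul_left _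

theorem pow_char_dvd_pow_sub_one {R : Type*} [CommRing R] {p n : ℕ} [Fact p.Prime] [CharP R p]
    {x u : R} (hu : x ∣ u - 1) (hn : p ∣ n) : x ^ p ∣ u ^ n - 1 := by
  obtain ⟨r, rfl⟩ := hn
  have hpow : x ^ p ∣ u ^ p - 1 := by
    simpa only [sub_pow_char, one_pow] using pow_dvd_pow_of_dvd hu p
  exact hpow.trans (pow_one_sub_dvd_pow_mul_sub_one u p r)

theorem modCong_one_of_toZMod_eq {p : ℕ} [Fact p.Prime] {w : ℤ_[p]} {m : ℤ} {x : ℚ}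
    (hm : PadicInt.toZMod w = m) (hx : (w : ℚ_[p]) = x) : modCong p 1 m x := by
  have hmem : (m : ℤ_[p]) - w ∈ RingHom.ker PadicInt.toZMod := by
    rw [RingHom.mem_ker, map_sub, map_intCast, hm, sub_self]
  rw [PadicInt.ker_toZMod, IsLocalRing.mem_maximalIdeal, PadicInt.mem_nonunits,
    PadicInt.norm_def] at hmem
  rw [modCong_one_iff_norm_sub_lt_one, ← hx]
  simpa using hmem

section

open PowerSeries

/-- A power series over the `p`-adic integers which agrees with `log (1 + X) / X` below degree
`p - 1`, where the denominators `i + 1` are units; `PadicInt.inv` is `0` at nonunits. -/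
noncomputable def padicLogQuot (p : ℕ) [Fact p.Prime] : ℤ_[p]⟦X⟧ :=
  mk fun i => (-1) ^ i * ((i + 1 : ℕ) : ℤ_[p]).inv

namespace padicLogQuot

variable {p : ℕ} [Fact p.Prime]

theorem add_one_mul_coeff {i : ℕ} (hi : i < p - 1) :
    ((i + 1 : ℕ) : ℤ_[p]) * coeff i (padicLogQuot p) = (-1) ^ i := by
  have hunit : ‖((i + 1 : ℕ) : ℤ_[p])‖ = 1 := by
    rw [PadicInt.norm_natCast_eq_one_iff, (Fact.out : p.Prime).coprime_iff_not_dvd]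
    exact Nat.not_dvd_of_pos_of_lt i.succ_pos (by omega)
  rw [padicLogQuot, coeff_mk, mul_left_comm, PadicInt.mul_inv hunit, mul_one]

theorem constantCoeff_eq_one : constantCoeff (padicLogQuot p) = 1 := by
  have hp := (Fact.out : p.Prime).one_lt
  simpa using add_one_mul_coeff (p := p) (i := 0) (by omega)

theorem X_pow_dvd_map_toZMod_sub :
    X ^ (p - 1) ∣ (padicLogQuot p).map PadicInt.toZMod -
      (((binomQuot p).map (Int.castRingHom (ZMod p)) : Polynomial (ZMod p)) : (ZMod p)⟦X⟧) := by
  refine X_pow_dvd_iff.2 fun i hi => ?_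
  have hne : ((i + 1 : ℕ) : ZMod p) ≠ 0 := by
    rw [Ne, ZMod.natCast_eq_zero_iff]
    exact Nat.not_dvd_of_pos_of_lt i.succ_pos (by omega)
  have hlog := congrArg PadicInt.toZMod (add_one_mul_coeff hi)
  have hquot := congrArg (Int.cast : ℤ → ZMod p) (binomQuot.add_one_mul_coeff Fact.out hi)
  rw [Int.cast_mul, Int.cast_natCast, Int.cast_natCast,
    cast_choose_pred_eq_neg_one_pow (by omega)] at hquot
  rw [map_mul, map_natCast, map_pow, map_neg, map_one] at hlog
  rw [map_sub, coeff_map, Polynomial.coeff_coe, Polynomial.coeff_map, eq_intCast, sub_eq_zero]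
  exact mul_left_cancel₀ hne (hlog.trans hquot.symm)

theorem X_pow_dvd_map_coe_sub {L : ℚ⟦X⟧} (hL : log ℚ = X * L) :
    X ^ (p - 1) ∣ (padicLogQuot p).map PadicInt.Coe.ringHom - L.map (Rat.castHom ℚ_[p]) := by
  refine X_pow_dvd_iff.2 fun i hi => ?_
  have hlog := congrArg (PadicInt.Coe.ringHom (p := p)) (add_one_mul_coeff hi)
  rw [map_mul, map_natCast, map_pow, map_neg, map_one] at hlog
  have hLi : ((i + 1 : ℕ) : ℚ) * coeff i L = (-1) ^ i := by
    rw [← coeff_succ_X_mul, ← hL, coeff_log, if_neg i.succ_ne_zero, Algebra.algebraMap_self,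
      RingHom.id_apply, mul_div_cancel₀ _ (Nat.cast_ne_zero.2 i.succ_ne_zero), pow_add _ i 2,
      neg_one_sq, mul_one]
  have hLi' := congrArg (Rat.castHom ℚ_[p]) hLi
  rw [map_mul, map_natCast, map_pow, map_neg, map_one] at hLi'
  rw [map_sub, coeff_map, coeff_map, sub_eq_zero]
  exact mul_left_cancel₀ (Nat.cast_ne_zero.2 i.succ_ne_zero) (hlog.trans hLi'.symm)

variable {W : ℤ_[p]⟦X⟧} {j : ℕ}

theorem coe_coeff_pow_eq_bernoulli' (hW : padicLogQuot p * W = 1) (hj : j < p - 1) :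
    ((coeff j (W ^ j) : ℤ_[p]) : ℚ_[p]) = (bernoulli' j / j.factorial : ℚ) := by
  obtain ⟨L, hL⟩ : X ∣ log ℚ := X_dvd_iff.2 constantCoeff_log
  have hL0 : constantCoeff L ≠ 0 := by
    rw [← coeff_zero_eq_constantCoeff_apply, ← coeff_succ_X_mul, ← hL, coeff_one_log]
    exact one_ne_zero
  have hLY : L * L⁻¹ = 1 := PowerSeries.mul_inv_cancel L hL0
  have hY : log ℚ * L⁻¹ = X := by rw [hL, mul_assoc, hLY, mul_one]
  have hdvd := dvd_pow_sub_pow_of_mul_eq_one (X_pow_dvd_map_coe_sub (p := p) hL)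
    (a' := W.map PadicInt.Coe.ringHom) (b' := L⁻¹.map (Rat.castHom ℚ_[p]))
    (by rw [← map_mul, hW, map_one]) (by rw [← map_mul, hLY, map_one]) j
  have hcoeff := X_pow_dvd_iff.1 hdvd j hj
  rw [← map_pow, ← map_pow, map_sub, coeff_map, coeff_map, sub_eq_zero,
    coeff_pow_eq_bernoulli'_div_factorial hY] at hcoeff
  exact hcoeff

theorem toZMod_coeff_pow (hW : padicLogQuot p * W = 1) (hj : j < p - 1) {K : ℕ}
    (hK : p ∣ K + j) :
    PadicInt.toZMod (coeff j (W ^ j)) = ((binomQuot p ^ K).coeff j : ℤ) := by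
  set U := (padicLogQuot p).map PadicInt.toZMod with hU
  set V := W.map (PadicInt.toZMod (p := p)) with hV
  have hUV : U * V = 1 := by rw [hU, hV, ← map_mul, hW, map_one]
  have : CharP (ZMod p)⟦X⟧ p := charP_of_injective_ringHom C_injective p
  have hone : X ^ (p - 1) ∣ U ^ (K + j) - 1 := by
    refine (pow_dvd_pow X (Nat.sub_le p 1)).trans (pow_char_dvd_pow_sub_one ?_ hK)
    rw [X_dvd_iff, map_sub, map_one, hU, ← coeff_zero_eq_constantCoeff_apply, coeff_map,
      coeff_zero_eq_constantCoeff_apply, constantCoeff_eq_one, map_one, sub_self]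
  have hdvd : X ^ (p - 1) ∣ V ^ j -
      (((binomQuot p).map (Int.castRingHom (ZMod p)) : Polynomial (ZMod p)) : (ZMod p)⟦X⟧) ^ K := by
    have hsplit : V ^ j - U ^ K = -(V ^ j * (U ^ (K + j) - 1)) := by
      have hpow : U ^ j * V ^ j = 1 := by rw [← mul_pow, hUV, one_pow]
      linear_combination U ^ K * hpow
    rw [← sub_add_sub_cancel _ (U ^ K)]
    refine dvd_add ?_ (X_pow_dvd_map_toZMod_sub.trans (sub_dvd_pow_sub_pow _ _ K))
    rw [hsplit]
    exact (hone.mul_left _).neg_right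
  have hcoeff := X_pow_dvd_iff.1 hdvd j hj
  rwa [hV, ← map_pow, map_sub, coeff_map, ← Polynomial.coe_pow, Polynomial.coeff_coe,
    ← Polynomial.map_pow, Polynomial.coeff_map, eq_intCast, sub_eq_zero] at hcoeff

end padicLogQuot

theorem modCong_coeff_binomQuot_pow_bernoulli' {p K j : ℕ} [Fact p.Prime] (hj : j < p - 1)
    (hK : p ∣ K + j) :
    modCong p 1 ((binomQuot p ^ K).coeff j) (bernoulli' j / j.factorial) := by
  have hW : padicLogQuot p * (padicLogQuot p).invOfUnit 1 = 1 :=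
    mul_invOfUnit _ _ padicLogQuot.constantCoeff_eq_one
  exact modCong_one_of_toZMod_eq (padicLogQuot.toZMod_coeff_pow hW hj hK)
    (padicLogQuot.coe_coeff_pow_eq_bernoulli' hW hj)

end

theorem not_pow_dvd_add_mul_pred {p i j : ℕ} (hj1 : 1 < j) (hj : j < p - 1) :
    ¬p ^ (i + 1) ∣ j + (i + 1) * (p - 1) := by
  have hp : p = 1 + (p - 1) := by omega
  have hbound : 1 + (i + 1) * (p - 1) ≤ p ^ (i + 1) := by
    have := one_add_mul_le_pow (a := (p : ℤ) - 1) (by omega) (i + 1)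
    zify [show 1 ≤ p by omega]
    simpa using this
  have hple : p ≤ p ^ (i + 1) := Nat.le_self_pow i.succ_ne_zero p
  have hmod : p ^ (i + 1) ≡ 1 [MOD p - 1] := by
    have : p ≡ 1 [MOD p - 1] := ((Nat.modEq_iff_dvd' (by omega)).2 dvd_rfl).symm
    simpa using this.pow (i + 1)
  rintro ⟨c, hc⟩
  obtain rfl : c = 1 := by
    have hc0 : c ≠ 0 := by rintro rfl; omega
    have hc2 : c < 2 := by
      by_contra! h2
      have := Nat.mul_le_mul_left (p ^ (i + 1)) h2
      omega
    omega
  rw [← mul_one (p ^ (i + 1)), ← hc] at hmod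
  have : j % (p - 1) = 1 % (p - 1) := by simpa [Nat.ModEq] using hmod
  rw [Nat.mod_eq_of_lt hj, Nat.mod_eq_of_lt (by omega)] at this
  omega

theorem fleckSum_div_natCast_eq_sum {p N : ℕ} (hp : p.Prime) (hN : 0 < N) :
    (fleckSum p N / N : ℚ) = ∑ d ∈ range (N + 1),
      (-p : ℚ) ^ d * (((Polynomial.X * binomQuot p) ^ d).coeff N : ℤ) / (p * d) := by
  set g : PowerSeries ℚ := (1 + PowerSeries.X) ^ p - PowerSeries.X ^ p - 1 with hg
  have hg0 : PowerSeries.constantCoeff g = 0 := by simp [hg, hp.ne_zero]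
  have hgpow (d : ℕ) : PowerSeries.coeff N (g ^ d) =
      (p : ℚ) ^ d * (((Polynomial.X * binomQuot p) ^ d).coeff N : ℤ) := by
    have hcoe : g = (((p : Polynomial ℤ) * (Polynomial.X * binomQuot p)).map
        (Int.castRingHom ℚ) : Polynomial ℚ) := by
      rw [binomQuot.natCast_mul_X_mul hp]
      simp [hg]
    rw [hcoe, ← Polynomial.coe_pow, Polynomial.coeff_coe, ← Polynomial.map_pow,
      Polynomial.coeff_map, mul_pow, ← Nat.cast_pow, Polynomial.coeff_natCast_mul]
    simp
  have hp0 : (p : ℚ) ≠ 0 := mod_cast hp.ne_zero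
  have hN0 : (N : ℚ) ≠ 0 := mod_cast hN.ne'
  have hlog := natCast_mul_fleckSum_eq_neg_mul_coeff_log_subst hp.pos hN
  rw [← hg, coeff_subst_eq_sum _ hg0 N.lt_succ_self] at hlog
  rw [div_eq_iff hN0]
  refine mul_left_cancel₀ hp0 ?_
  rw [hlog, mul_comm (∑ _ ∈ _, _), mul_left_comm, ← mul_neg, mul_sum, ← sum_neg_distrib]
  congr 1
  refine sum_congr rfl fun d _ => ?_
  rw [hgpow, PowerSeries.coeff_log]
  obtain _ | d := d
  · simp
  · rw [if_neg d.succ_ne_zero, neg_pow, Algebra.algebraMap_self, RingHom.id_apply]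
    field_simp
    ring

theorem modCong_pow_mul_div_zero {p i : ℕ} [Fact p.Prime] {d : ℤ} (hd : ¬(p : ℤ) ^ i ∣ d)
    (z : ℤ) : modCong p 1 ((p : ℚ) ^ i * z / d) 0 := by
  have hlt : ‖(p : ℚ_[p]) ^ i‖ < ‖(d : ℚ_[p])‖ := by
    rw [Padic.norm_p_pow]
    exact not_le.1 fun hle => hd ((Padic.norm_int_le_pow_iff_dvd d i).1 hle)
  rw [modCong_one_iff_norm_sub_lt_one]
  push_cast
  rw [sub_zero, norm_div, norm_mul, div_lt_one ((norm_nonneg _).trans_lt hlt)]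
  exact (mul_le_of_le_one_right (norm_nonneg _) (Padic.norm_int_le_one z)).trans_lt hlt

theorem modCong_neg_pow_mul_coeff_binomQuot_pow_div_zero {p K i j : ℕ} [Fact p.Prime]
    (hj1 : 1 < j) (hj : j < p - 1) :
    modCong p 1 ((-p : ℚ) ^ (i + 1) *
      (((binomQuot p ^ K).coeff (j + (i + 1) * (p - 1)) : ℤ) / K)) 0 := by
  set J := j + (i + 1) * (p - 1)
  obtain rfl | hK := eq_or_ne K 0
  · simpa using modCong_refl p 1 0
  obtain ⟨q, hq⟩ := natCast_dvd_mul_coeff_pow (binomQuot p) K J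
  have hK0 : (K : ℚ) ≠ 0 := mod_cast hK
  have hJ0 : (J : ℚ) ≠ 0 := mod_cast (by omega : J ≠ 0)
  have hquot : (((binomQuot p ^ K).coeff J : ℤ) : ℚ) / K = q / J := by
    rw [div_eq_div_iff hK0 hJ0, mul_comm, mul_comm (q : ℚ)]
    exact_mod_cast hq
  have hdvd : ¬(p : ℤ) ^ (i + 1) ∣ (J : ℕ) := mod_cast not_pow_dvd_add_mul_pred hj1 hj
  have hterm : (-p : ℚ) ^ (i + 1) * (q / J) =
      (p : ℚ) ^ (i + 1) * ((-1) ^ (i + 1) * q : ℤ) / (J : ℤ) := by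
    rw [neg_pow]
    push_cast
    ring
  rw [hquot, hterm]
  exact modCong_pow_mul_div_zero hdvd _

theorem modCong_fleckSum_div_coeff_binomQuot_pow {p N e j : ℕ} [Fact p.Prime] (hN : 0 < N)
    (hj1 : 1 < j) (hj : j < p - 1) (he : (e + 1) * (p - 1) = N + j) :
    modCong p 1 (fleckSum p N / (N * (-p) ^ e))
      (-(((binomQuot p ^ (e + 1)).coeff j : ℤ) / (e + 1 : ℕ))) := by
  have hp : p.Prime := Fact.out
  have hp0 : (p : ℚ) ≠ 0 := mod_cast hp.ne_zero
  have hpe : (-p : ℚ) ^ e ≠ 0 := pow_ne_zero e (neg_ne_zero.2 hp0)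
  have hlt : e * (p - 1) < N := by
    rw [add_one_mul] at he
    omega
  have heN : e + 1 ∈ range (N + 1) :=
    mem_range.2 (Nat.succ_lt_succ ((Nat.le_mul_of_pos_right e (by omega)).trans_lt hlt))
  have hsum : ∑ d ∈ range (N + 1),
      (if d = e + 1 then -(((binomQuot p ^ (e + 1)).coeff j : ℤ) / (e + 1 : ℕ) : ℚ) else 0) =
      -(((binomQuot p ^ (e + 1)).coeff j : ℤ) / (e + 1 : ℕ)) :=
    sum_ite_eq_of_mem' _ _ _ heN
  rw [← div_div, fleckSum_div_natCast_eq_sum hp hN, sum_div, ← hsum]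
  refine modCong.sum fun d _ => ?_
  obtain hd | rfl | hd := lt_trichotomy d (e + 1)
  · have hzero := binomQuot.coeff_X_mul_pow_eq_zero hp
      ((Nat.mul_le_mul_right (p - 1) (Nat.le_of_lt_succ hd)).trans_lt hlt)
    rw [if_neg hd.ne, hzero]
    simpa using modCong_refl p 1 0
  · rw [if_pos rfl, binomQuot.coeff_X_mul_pow hp he]
    refine Or.inl ?_
    rw [pow_succ]
    field_simp
  · obtain ⟨i, rfl⟩ := Nat.exists_eq_add_of_lt hd
    have hK : (e + 1 + i + 1) * (p - 1) = N + (j + (i + 1) * (p - 1)) := by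
      linear_combination he
    rw [if_neg hd.ne', binomQuot.coeff_X_mul_pow hp hK]
    have hsmall := (modCong_neg_pow_mul_coeff_binomQuot_pow_div_zero (K := e + 1 + i + 1)
      (i := i) hj1 hj).neg
    rw [neg_zero] at hsmall
    convert hsmall using 1
    rw [add_assoc e 1 i, add_comm 1 i, pow_succ, pow_add]
    field_simp

theorem modCong_neg_one_div_factorial_mul_factorial_div {p s j a : ℕ} [Fact p.Prime]
    (hsj : s + j = p - 1) (hj : 0 < j) (ha : p ∣ a + j) :
    modCong p 1 (-1 / a) ((-1) ^ j * (s.factorial * j.factorial) / (s + 1 : ℕ)) := by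
  have hs' : ¬p ∣ s + 1 := Nat.not_dvd_of_pos_of_lt s.succ_pos (by omega)
  have ha' : ¬p ∣ a := fun h =>
    Nat.not_dvd_of_pos_of_lt hj (by omega) ((Nat.dvd_add_right h).1 ha)
  have hint : modCong p 1 (-(s + 1 : ℕ) : ℤ) ((-1) ^ j * (s.factorial * j.factorial) * a : ℤ) := by
    have hp := (Fact.out : p.Prime).pos
    have hfac := cast_factorial_mul_factorial_eq_neg_one_pow hsj
    have ha0 : ((a + j : ℕ) : ZMod p) = 0 := (ZMod.natCast_eq_zero_iff _ _).2 ha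
    have hs0 : ((s + 1 + j : ℕ) : ZMod p) = 0 := by
      rw [show s + 1 + j = p by omega, ZMod.natCast_self]
    have hsign : ((-1) ^ j * (-1) ^ (j + 1) : ZMod p) = -1 := by
      rw [← pow_add, Odd.neg_one_pow ⟨j, by ring⟩]
    refine modCong_intCast_iff_dvd_sub (b := 1).2 ?_
    rw [pow_one, ← ZMod.intCast_zmod_eq_zero_iff_dvd]
    push_cast at ha0 hs0 ⊢
    rw [hfac, hsign]
    linear_combination ha0 - hs0
  have ha0 : (a : ℚ) ≠ 0 := Nat.cast_ne_zero.2 (by rintro rfl; exact ha' (dvd_zero p))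
  have hs0 : ((s + 1 : ℕ) : ℚ) ≠ 0 := Nat.cast_ne_zero.2 s.succ_ne_zero
  convert (hint.div_natCast ha').div_natCast hs' using 1
  · push_cast at hs0 ⊢
    field_simp
  · push_cast
    field_simp

theorem modCong_fleckSum_div_bernoulli {p N e s j : ℕ} [Fact p.Prime] (hN : 0 < N) (hpN : p ∣ N)
    (hs : 0 < s) (hj : 1 < j) (hsj : s + j = p - 1) (he : (e + 1) * (p - 1) = N + j) :
    modCong p 1 (fleckSum p N / (N * (-p) ^ e)) (s.factorial / (s + 1) * bernoulli j) := by
  have hK : p ∣ e + 1 + j := by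
    have hpe : N + (e + 1 + j) = (e + 1) * p := by
      rw [← Nat.sub_add_cancel (Fact.out : p.Prime).one_le, mul_add_one, he]
      ring
    exact (Nat.dvd_add_right hpN).1 (hpe ▸ dvd_mul_left p (e + 1))
  set c := (binomQuot p ^ (e + 1)).coeff j
  set w : ℤ := (-1) ^ j * (s.factorial * j.factorial) with hw
  have hlead : modCong p 1 (fleckSum p N / (N * (-p) ^ e)) (c * (-1 / (e + 1 : ℕ))) := by
    rw [← mul_div_assoc, mul_neg_one, neg_div]
    exact modCong_fleckSum_div_coeff_binomQuot_pow hN hj (by omega) he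
  have hwilson : modCong p 1 (c * (-1 / (e + 1 : ℕ))) (c * (w / (s + 1 : ℕ))) := by
    rw [hw]
    exact_mod_cast (modCong_neg_one_div_factorial_mul_factorial_div hsj (by omega) hK).mul_left
      (Padic.norm_int_le_one c)
  have hbernoulli :
      modCong p 1 (c * (w / (s + 1 : ℕ))) (w * (bernoulli' j / j.factorial) / (s + 1 : ℕ)) := by
    rw [mul_div_left_comm, ← mul_div_assoc]
    refine modCong.div_natCast (Nat.not_dvd_of_pos_of_lt s.succ_pos (by omega)) ?_
    refine (modCong_coeff_binomQuot_pow_bernoulli' (by omega) hK).mul_left ?_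
    rw [Rat.cast_intCast]
    exact Padic.norm_int_le_one w
  have hj0 : (j.factorial : ℚ) ≠ 0 := mod_cast j.factorial_ne_zero
  convert (hlead.trans hwilson).trans hbernoulli using 1
  rw [hw, bernoulli]
  push_cast
  field_simp

theorem modCong.div_natCast_mul_neg_pow {p N e b : ℕ} [Fact p.Prime] {x y : ℚ} (hN : N ≠ 0)
    (hb : e + 1 + padicValNat p N ≤ b) (h : modCong p b x y) :
    modCong p 1 (x / (N * (-p) ^ e)) (y / (N * (-p) ^ e)) := by
  have hp0 : (-p : ℚ) ≠ 0 := neg_ne_zero.2 (mod_cast (Fact.out : p.Prime).ne_zero)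
  refine h.div ?_
  rw [padicValRat.mul (Nat.cast_ne_zero.2 hN) (pow_ne_zero e hp0), padicValRat.pow,
    padicValRat.neg, padicValRat.self (Fact.out : p.Prime).one_lt, padicValRat.of_nat]
  omega

theorem modCong_stirling2_div_fleckSum {p N e b M : ℕ} [Fact p.Prime] (hN : 0 < N)
    (hM : 0 < M) (hdvd : Nat.totient (p ^ b) ∣ M) (hb : e + 1 + padicValNat p N ≤ b) :
    modCong p 1 (-((N - 1).factorial * stirling2 M N / (-p : ℚ) ^ e))
      (fleckSum p N / (N * (-p) ^ e)) := by
  have hN0 : (N : ℚ) ≠ 0 := mod_cast hN.ne'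
  have hS := (modCong_factorial_mul_stirling2 hM hN hdvd).neg.div_natCast_mul_neg_pow hN.ne' hb
  rw [neg_neg, ← Nat.mul_factorial_pred hN.ne', Nat.cast_mul, mul_assoc, ← mul_neg,
    mul_div_mul_left _ _ hN0, neg_div] at hS
  exact hS

theorem modCong_stirling2_pred_div_fleckSum {p N e b M : ℕ} [Fact p.Prime] (hN : 0 < N)
    (heven : Even N) (hpN : p ∣ N) (hM : 0 < M) (hdvd : Nat.totient (p ^ b) ∣ M)
    (hb : e + 1 + padicValNat p N ≤ b) :
    modCong p 1 (2 / N * (N - 1).factorial * stirling2 M (N - 1) / (-p : ℚ) ^ e)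
      (fleckSum p N / (N * (-p) ^ e)) := by
  have hpred : 0 < N - 1 := Nat.sub_pos_of_lt
    ((Fact.out : p.Prime).one_lt.trans_le (Nat.le_of_dvd hN hpN))
  have hS := ((modCong_factorial_mul_stirling2 hM hpred hdvd).mul_left (a := 2)
    (by exact_mod_cast Padic.norm_int_le_one 2)).div_natCast_mul_neg_pow hN.ne' hb
  convert hS using 1
  · ring
  · rw [fleckSum_eq_neg_two_mul hN heven hpN]
    push_cast
    ring

theorem nLow_eq_mod {p n : ℕ} (hp : 0 < p) (hn : ¬(p - 1) ∣ n) : nLow p n = n % (p - 1) := by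
  have hmod : 1 ≤ n % (p - 1) := Nat.one_le_iff_ne_zero.2 fun h => hn (Nat.dvd_of_mod_eq_zero h)
  have hn0 : 1 ≤ n := hmod.trans (Nat.mod_le n _)
  have hcast : ((n : ℤ) - 1) % ((p : ℤ) - 1) = ((n - 1) % (p - 1) : ℕ) := by
    push_cast [hn0, Nat.one_le_iff_ne_zero.2 hp.ne']
    rfl
  rw [nLow, hcast, ← Nat.mod_sub_of_le hmod]
  omega

theorem sub_div_eq_div_of_le_mod {N d i : ℕ} (hi : i ≤ N % d) : (N - i) / d = N / d := by
  obtain rfl | hd := d.eq_zero_or_pos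
  · simp
  · have hsplit : N - i = d * (N / d) + (N % d - i) := by
      rw [← Nat.add_sub_assoc hi, Nat.div_add_mod]
    rw [hsplit, Nat.mul_add_div hd, Nat.div_eq_of_lt ((Nat.sub_le _ _).trans_lt (Nat.mod_lt N hd)),
      add_zero]

theorem mul_mod_pred {p : ℕ} (hp : 0 < p) (n : ℕ) : p * n % (p - 1) = n % (p - 1) := by
  obtain ⟨r, rfl⟩ : ∃ r, p = r + 1 := ⟨p - 1, by omega⟩
  rw [Nat.add_sub_cancel, add_one_mul, Nat.mul_add_mod]

theorem padicValNat_lt_mul_sub_one_div {p n : ℕ} (hp : 1 < p) (hn : 0 < n) :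
    padicValNat p n < (p * n - 1) / (p - 1) := by
  have hle : n ≤ (p * n - 1) / (p - 1) := by
    rw [Nat.le_div_iff_mul_le (Nat.sub_pos_of_lt hp), Nat.mul_sub_one, mul_comm]
    omega
  calc padicValNat p n ≤ Nat.log p n := padicValNat_le_nat_log n
    _ < n := Nat.log_lt_self p hn.ne'
    _ ≤ (p * n - 1) / (p - 1) := hle

theorem two_le_mod_pred_and_mod_pred_add_one_lt {p n : ℕ} (hp : p.Prime) (hn : Even n)
    (h : ¬(p - 1) ∣ n) : 2 ≤ n % (p - 1) ∧ n % (p - 1) + 1 < p - 1 := by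
  have hodd : Odd p := hp.odd_of_ne_two (by rintro rfl; exact h (one_dvd n))
  have hpred : Even (p - 1) := Nat.Odd.sub_odd hodd odd_one
  have hmod : Even (n % (p - 1)) := (Even.mod_even_iff hpred).2 hn
  rw [Nat.dvd_iff_mod_eq_zero] at h
  have hlt := Nat.mod_lt n (Nat.sub_pos_of_lt hp.one_lt)
  obtain ⟨k, hk⟩ := hmod
  obtain ⟨l, hl⟩ := hpred
  omega

theorem stmt7_general (p n b m : ℕ) (hp : p.Prime) (heven : Even n) (h : ¬(p - 1) ∣ n)
    (hm : 0 < m) (hb : (p * n - 1) / (p - 1) + 1 + padicValNat p n < b) :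
    modCong p 1
      ((2 / ((p:ℚ) * (n:ℚ))) * ((p*n-1).factorial : ℚ) *
          stirling2 (m * Nat.totient (p^b)) (p*n-1) / (-(p:ℚ))^((p*n-2)/(p-1)))
      (-(((p*n-1).factorial : ℚ) *
          stirling2 (m * Nat.totient (p^b)) (p*n) / (-(p:ℚ))^((p*n-1)/(p-1)))) ∧
    modCong p 1
      (-(((p*n-1).factorial : ℚ) *
          stirling2 (m * Nat.totient (p^b)) (p*n) / (-(p:ℚ))^((p*n-1)/(p-1))))
      (((nLow p n).factorial : ℚ) / ((nLow p n : ℚ) + 1) * bernoulli (p - 1 - nLow p n)) := by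
  have : Fact p.Prime := ⟨hp⟩
  have hn : 0 < n := Nat.pos_of_ne_zero (by rintro rfl; exact h (dvd_zero _))
  have hN : 0 < p * n := Nat.mul_pos hp.pos hn
  have hp1 : 0 < p - 1 := Nat.sub_pos_of_lt hp.one_lt
  have hmod : p * n % (p - 1) = nLow p n := by rw [mul_mod_pred hp.pos, nLow_eq_mod hp.pos h]
  obtain ⟨hs, hj⟩ : 2 ≤ nLow p n ∧ nLow p n + 1 < p - 1 := by
    rw [nLow_eq_mod hp.pos h]
    exact two_le_mod_pred_and_mod_pred_add_one_lt hp heven h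
  have hdiv : (p * n - 1) / (p - 1) = p * n / (p - 1) := sub_div_eq_div_of_le_mod (by omega)
  have hdiv' : (p * n - 2) / (p - 1) = p * n / (p - 1) := sub_div_eq_div_of_le_mod (by omega)
  have hval : padicValNat p (p * n) = padicValNat p n + 1 := by
    rw [padicValNat.mul hp.ne_zero hn.ne', padicValNat_self, add_comm]
  rw [hdiv] at hb
  have he := Nat.div_add_mod (p * n) (p - 1)
  have hM : 0 < m * Nat.totient (p ^ b) := Nat.mul_pos hm (Nat.totient_pos.2 (pow_pos hp.pos b))
  have hpred := modCong_stirling2_pred_div_fleckSum hN (heven.mul_left p) (dvd_mul_right p n)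
    hM (dvd_mul_left _ m) (e := p * n / (p - 1)) (by omega)
  have hself := modCong_stirling2_div_fleckSum hN hM (dvd_mul_left _ m) (e := p * n / (p - 1))
    (by omega)
  have hbernoulli := modCong_fleckSum_div_bernoulli hN (dvd_mul_right p n) (s := nLow p n)
    (j := p - 1 - nLow p n) (e := p * n / (p - 1)) (by omega) (by omega) (by omega)
    (by rw [add_one_mul, mul_comm]; omega)
  rw [hdiv, hdiv', ← Nat.cast_mul]
  exact ⟨hpred.trans hself.symm, hself.trans hbernoulli⟩

theorem stmt7 (p n b m : ℕ) (hp : p.Prime) (hodd : Odd p) (hn : 0 < n) (heven : Even n)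
    (h : ¬ (p - 1) ∣ n) (hb : 0 < b) (hm : 0 < m) (hb2 : 2 * ((p*n-1)/(p-1)) < b) :
    modCong p 1
      ((2 / ((p:ℚ) * (n:ℚ))) * ((p*n-1).factorial : ℚ) *
          stirling2 (m * Nat.totient (p^b)) (p*n-1) / (-(p:ℚ))^((p*n-2)/(p-1)))
      (-(((p*n-1).factorial : ℚ) *
          stirling2 (m * Nat.totient (p^b)) (p*n) / (-(p:ℚ))^((p*n-1)/(p-1)))) ∧
    modCong p 1
      (-(((p*n-1).factorial : ℚ) *
          stirling2 (m * Nat.totient (p^b)) (p*n) / (-(p:ℚ))^((p*n-1)/(p-1))))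
      (((nLow p n).factorial : ℚ) / ((nLow p n : ℚ) + 1) * bernoulli (p - 1 - nLow p n)) :=
  stmt7_general p n b m hp heven h hm
    (by have := padicValNat_lt_mul_sub_one_div hp.one_lt hn; omega)
end
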